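/- arXiv:1912.01695 — 3 statements merged into one kernel-verified Lean document; each statement's English description precedes it below -/
import Mathlib

section
/- There exists a finitely presented infinite nilsemigroup; that is, there exist a natural number n and a finite set R of pairs of elements of the free semigroup on n generators such that the quotient S of the free semigroup on n generators by the congruence generated by R is infinite, has a zero element z, and for every element x of S there exists a positive integer k with x^k = z. -/
/-!
The semigroup is given by a rewriting system that simulates itself on words of half the length.
Every letter except zero is a pair `(control, payload)` of symbols from one finite set `Ctl`, and
every relation replaces two adjacent letters by two letters or by zero. The substitution `phi`
sends a letter `(q, p)` to the block `(t0, q) (r1, p)`. Everything follows from two facts about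
`Eqv` (equality of words by the length-preserving relations) and `Nul` (equality to zero).

* `lift_nul` and `unlift_nul`: `phi W` is zero if and only if `W` is zero. A one-letter word is not
  zero, so the words `long n = phi^[n] [(t0, t0)]`, of length `2 ^ n`, are not zero. As nonzero
  words can only be equal if their lengths agree, they represent infinitely many elements.
* `parse`: a word that starts with an opening letter, ends with a closing letter and contains no
  pair of neighbours with controls forbidden by `Adj` is zero or is equal to some `phi W`, where
  `W` has half the length. A power `u ^ 4` that is not trivially zero contains an opening letter,
  so a cyclic conjugate of `u` is equal to some `phi W`; by induction on the length a power of `W`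
  is zero, hence so is a power of `u` (`nil_aux`).

The simulation works as follows. Two neighbouring blocks `(t0, a) (r1, p)` and `(t0, b) (r1, q)`
can be joined into a region `(r0, a) (xE, b) (yN, p) (r1, q)`: the left half holds the controls
`a b` of the two simulated letters, the right half their payloads `p q`. The two middle controls of
the region are the state of a small reversible machine. It rewrites `a b` alone by the control moves
`Rho`; or it guesses the code of the pair `a b`, checks the guess bit by bit, makes the right half
perform on `p q` the action `Pay t` attached to the type `t` of `a b`, and then moves `a b` to the
other side of its toggle `Tog t`. These are exactly the effects of the relations on the simulated
pair, and zero arises in the region exactly when it does for that pair. Self-reference costs only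
finitely many relations because every relation acting on payloads is a toggle of one of the
thirteen types in `Typ`, a type determines what happens to the payloads, and the relations that
drive the region are themselves of these types. The dictionary between states of regions and pairs
of simulated letters is `Dec`, extended to words by `Rep`; `sim` and `rep_zpat` say that it is
respected by all relations.
-/

/-- `iterMul x k` is the product of `k + 1` copies of `x`, i.e. `x ^ (k + 1)`
(semigroups have no `1`, so powers start at exponent `1`). -/
def iterMul {M : Type*} [Mul M] (x : M) : ℕ → M
  | 0 => x
  | n + 1 => iterMul x n * x

namespace Nilsemi

/-! ### The rewriting system -/

/-- The types of the relations that act on payloads: `sw` swaps the two payloads, `rho` applies a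
control move to them, `tau` applies a toggle to them, and `rd l v` leaves them fixed but tests
whether bit `l` of their code is `v`. -/
inductive Typ
  | sw | rho | tau
  | rd (l : Fin 5) (v : Bool)

/-- A type together with a side of its toggle; `false` is the source and `true` the target. -/
abbrev Code := Typ × Bool

/-- An injective numbering of the thirteen types. -/
def num : Typ → ℕ
  | .sw => 0
  | .rho => 1
  | .tau => 2
  | .rd l v => 3 + 2 * l.val + v.toNat

/-- Bit `l` of the number of a code; five bits suffice as there are twenty-six codes. -/
def bit (l : Fin 5) (c : Code) : Bool := (2 * num c.1 + c.2.toNat).testBit l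

theorem num_lt (t : Typ) : num t < 13 := by
  rcases t with _ | _ | _ | ⟨l, v⟩ <;> simp only [num] <;> try omega
  cases v <;> simp <;> omega

theorem num_inj {t t' : Typ} (h : num t = num t') : t = t' := by
  rcases t with _ | _ | _ | ⟨l, v⟩ <;> rcases t' with _ | _ | _ | ⟨l', v'⟩ <;>
    simp only [num] at h <;> (try rfl) <;> (try omega)
  have h1 := v.toNat_le
  have h2 := v'.toNat_le
  have h3 : l = l' := Fin.ext (by omega)
  have h4 : v = v' := by
    cases v <;> cases v' <;> simp_all
  rw [h3, h4]

theorem bit_inj {c c' : Code} (h : ∀ l, bit l c = bit l c') : c = c' := by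
  have hc : 2 * num c.1 + c.2.toNat = 2 * num c'.1 + c'.2.toNat := by
    have h1 := c.2.toNat_le
    have h2 := c'.2.toNat_le
    have h3 := num_lt c.1
    have h4 := num_lt c'.1
    apply Nat.eq_of_testBit_eq
    intro i
    by_cases hi : i < 5
    · exact h ⟨i, hi⟩
    · have : 2 ^ 5 ≤ 2 ^ i := Nat.pow_le_pow_right (by norm_num) (by omega)
      rw [Nat.testBit_lt_two_pow (by omega), Nat.testBit_lt_two_pow (by omega)]
  obtain ⟨t, s⟩ := c
  obtain ⟨t', s'⟩ := c'
  simp only at hc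
  have : num t = num t' ∧ s = s' := by
    cases s <;> cases s' <;> simp at hc ⊢ <;> omega
  rw [num_inj this.1, this.2]

/-- The control symbols, which also serve as payloads. A free block has controls `t0 r1` or, after
a control move, `r0 t1`. A region has controls `r0 X Y r1`, and its state `X Y` is one of
* `xE yN`: idle;
* `xra s yN`: a control move is applied to the left payloads between `s = false` and `s = true`;
* `xck l c s yN`: the guess that the left payloads have code `c` is verified for the bits below `l`
  and, when `s = true`, for bit `l` too;
* `xN (yst t s)`: the right payloads are before (`s = false`) or after (`s = true`) the action of
  type `t`;
* `xtg t s yN`: the left payloads are before or after their toggle, which has type `t`. -/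
inductive Ctl
  | t0 | r0 | t1 | r1
  | xE | xN | yN
  | xra (s : Bool)
  | xck (l : Fin 5) (c : Code) (s : Bool)
  | xtg (t : Typ) (s : Bool)
  | yst (t : Typ) (s : Bool)

open Ctl

instance : Finite Typ :=
  .of_injective (fun t => (⟨num t, num_lt t⟩ : Fin 13)) fun _ _ h => num_inj (Fin.ext_iff.1 h)

instance : Finite Ctl := by
  let f : Fin 7 ⊕ Bool ⊕ (Fin 5 × Code × Bool) ⊕ (Typ × Bool) ⊕ (Typ × Bool) → Ctl
    | .inl i => ![t0, r0, t1, r1, xE, xN, yN] i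
    | .inr (.inl s) => xra s
    | .inr (.inr (.inl (l, c, s))) => xck l c s
    | .inr (.inr (.inr (.inl (t, s)))) => xtg t s
    | .inr (.inr (.inr (.inr (t, s)))) => yst t s
  refine .of_surjective f fun c => ?_
  cases c with
  | t0 => exact ⟨.inl 0, rfl⟩
  | r0 => exact ⟨.inl 1, rfl⟩
  | t1 => exact ⟨.inl 2, rfl⟩
  | r1 => exact ⟨.inl 3, rfl⟩
  | xE => exact ⟨.inl 4, rfl⟩
  | xN => exact ⟨.inl 5, rfl⟩
  | yN => exact ⟨.inl 6, rfl⟩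
  | xra s => exact ⟨.inr (.inl s), rfl⟩
  | xck l c s => exact ⟨.inr (.inr (.inl (l, c, s))), rfl⟩
  | xtg t s => exact ⟨.inr (.inr (.inr (.inl (t, s)))), rfl⟩
  | yst t s => exact ⟨.inr (.inr (.inr (.inr (t, s)))), rfl⟩

/-- A letter other than zero: a control symbol and a payload symbol. -/
abbrev Ltr := Ctl × Ctl

/-- `Rho a b a₁ b₁`: the controls `a b` may be replaced by `a₁ b₁`, whatever the payloads are. -/
inductive Rho : Ctl → Ctl → Ctl → Ctl → Prop
  | free : Rho t0 r1 r0 t1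
  | ra (s) : Rho r0 xE r0 (xra s)
  | ck (c) : Rho r0 xE r0 (xck 0 c false)
  | next (l l' : Fin 5) (c) (h : l.val + 1 = l'.val) : Rho r0 (xck l c true) r0 (xck l' c false)
  | go (t) : Rho (xck 4 (t, false) true) yN xN (yst t false)
  | back (t) : Rho xN (yst t true) (xtg t false) yN
  | fin (t) : Rho r0 (xtg t true) r0 (xck 4 (t, true) true)

/-- `Tog t a b a₁ b₁`: the controls `a b` may be replaced by `a₁ b₁` provided that the payloads
undergo the action of type `t`. -/
inductive Tog : Typ → Ctl → Ctl → Ctl → Ctl → Prop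
  | join : Tog .sw t1 t0 xE yN
  | ra : Tog .rho r0 (xra false) r0 (xra true)
  | ck (l c) : Tog (.rd l (bit l c)) r0 (xck l c false) r0 (xck l c true)
  | tg (t) : Tog .tau r0 (xtg t false) r0 (xtg t true)
  | st (t) : Tog t (yst t false) r1 (yst t true) r1

/-- The pair `a b` of controls is on side `c.2` of a toggle of type `c.1`. -/
def HasTy (c : Code) (a b : Ctl) : Prop :=
  if c.2 then ∃ a₁ b₁, Tog c.1 a₁ b₁ a b else ∃ a₁ b₁, Tog c.1 a b a₁ b₁

/-- A pair of controls is on one side of one toggle at most, so that codes can be read off. -/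
theorem HasTy.unique {c c' : Code} {a b : Ctl} (h : HasTy c a b) (h' : HasTy c' a b) : c = c' := by
  obtain ⟨t, s⟩ := c
  obtain ⟨t', s'⟩ := c'
  cases s <;> cases s' <;> simp only [HasTy, if_true, Bool.false_eq_true, if_false] at h h' <;>
    obtain ⟨_, _, h⟩ := h <;> obtain ⟨_, _, h'⟩ := h' <;> cases h <;> cases h' <;> rfl

theorem Tog.src {t a b a' b'} (h : Tog t a b a' b') : HasTy (t, false) a b := by
  simpa [HasTy] using ⟨a', b', h⟩

theorem Tog.tgt {t a b a' b'} (h : Tog t a b a' b') : HasTy (t, true) a' b' := by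
  simpa [HasTy] using ⟨a, b, h⟩

theorem HasTy.tog {t a b} (h : HasTy (t, false) a b) : ∃ a' b', Tog t a b a' b' := by
  simpa [HasTy] using h

theorem HasTy.untog {t a b} (h : HasTy (t, true) a b) : ∃ a' b', Tog t a' b' a b := by
  simpa [HasTy] using h

theorem Tog.right_unique {t t' a b a' b' a'' b''} (h : Tog t a b a' b') (h' : Tog t' a b a'' b'') :
    t = t' ∧ a' = a'' ∧ b' = b'' := by
  cases h <;> cases h' <;> exact ⟨rfl, rfl, rfl⟩

/-- The pairs of controls allowed to be adjacent; all other pairs of neighbours are zero. -/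
inductive Adj : Ctl → Ctl → Prop
  | free0 : Adj t0 r1
  | free1 : Adj r0 t1
  | xE : Adj r0 xE
  | xN : Adj r0 xN
  | xra (s) : Adj r0 (xra s)
  | xck (l c s) : Adj r0 (xck l c s)
  | xtg (t s) : Adj r0 (xtg t s)
  | mE : Adj Ctl.xE Ctl.yN
  | mra (s) : Adj (Ctl.xra s) Ctl.yN
  | mck (l c s) : Adj (Ctl.xck l c s) Ctl.yN
  | mtg (t s) : Adj (Ctl.xtg t s) Ctl.yN
  | mst (t s) : Adj Ctl.xN (yst t s)
  | yN : Adj Ctl.yN r1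
  | yst (t s) : Adj (Ctl.yst t s) r1
  | rt : Adj r1 t0
  | rr : Adj r1 r0
  | tt : Adj t1 t0
  | tr : Adj t1 r0

/-- `Pay t p q p₁ q₁`: the action of type `t` may turn the payloads `p q` into `p₁ q₁`. -/
inductive Pay : Typ → Ctl → Ctl → Ctl → Ctl → Prop
  | sw (p q) : Pay .sw p q q p
  | rho {p q p' q'} : Rho p q p' q' → Pay .rho p q p' q'
  | tau {t p q p' q'} : Tog t p q p' q' → Pay .tau p q p' q'
  | rd {l v c p q} : HasTy c p q → bit l c = v → Pay (.rd l v) p q p q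

/-- `Bad c p q`: a pair of letters whose controls have code `c` is zero when its payloads are `p q`.
For `rho` these are the payloads forbidden as neighbouring controls, for `tau` the payloads to
which no toggle applies, and for `rd l v` the payloads that fail the test. -/
inductive Bad : Code → Ctl → Ctl → Prop
  | rho {p q} : ¬ Adj p q → Bad (.rho, false) p q
  | tau {p q} : (∀ t, ¬ HasTy (t, false) p q) → Bad (.tau, false) p q
  | rd {l v p q} : (∀ c, HasTy c p q → bit l c ≠ v) → Bad (.rd l v, true) p q

/-- The relations not involving zero: a control move with arbitrary payloads, or a toggle
combined with the action of its type on the payloads. -/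
inductive Rule : Ltr → Ltr → Ltr → Ltr → Prop
  | ctl {a b a' b'} (p q) : Rho a b a' b' → Rule (a, p) (b, q) (a', p) (b', q)
  | typ {t a b a₁ b₁ p q p₁ q₁} : Tog t a b a₁ b₁ → Pay t p q p₁ q₁ →
      Rule (a, p) (b, q) (a₁, p₁) (b₁, q₁)

/-- The pairs of letters equal to zero. -/
inductive Zer : Ltr → Ltr → Prop
  | adj {a b} (p q) : ¬ Adj a b → Zer (a, p) (b, q)
  | bad {c a b p q} : HasTy c a b → Bad c p q → Zer (a, p) (b, q)

/-- `Rule` in either direction. -/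
def SRule (a b a₁ b₁ : Ltr) : Prop := Rule a b a₁ b₁ ∨ Rule a₁ b₁ a b

/-- One application of a relation inside a word, in either direction. -/
inductive Step : List Ltr → List Ltr → Prop
  | here {a b a' b'} (r) : SRule a b a' b' → Step (a :: b :: r) (a' :: b' :: r)
  | cons (x) {l l₁} : Step l l₁ → Step (x :: l) (x :: l₁)

/-- The word contains a pair of neighbours equal to zero. -/
inductive ZPat : List Ltr → Prop
  | here {a b} (r) : Zer a b → ZPat (a :: b :: r)
  | cons (x) {l} : ZPat l → ZPat (x :: l)

/-- The words are connected by relations that do not involve zero. -/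
abbrev Eqv : List Ltr → List Ltr → Prop := Relation.ReflTransGen Step

/-- The word becomes zero. -/
def Nul (w : List Ltr) : Prop := ∃ w', Eqv w w' ∧ ZPat w'

theorem Step.symm {l l'} (h : Step l l') : Step l' l := by
  induction h with
  | here r h => exact .here r h.symm
  | cons x _ ih => exact .cons x ih

theorem Eqv.symm {l l'} (h : Eqv l l') : Eqv l' l := by
  induction h with
  | refl => exact .refl
  | tail _ h ih => exact .head h.symm ih

theorem Step.append_right {l l'} (h : Step l l') (r : List Ltr) : Step (l ++ r) (l' ++ r) := by
  induction h with
  | here s h => exact .here _ h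
  | cons x _ ih => exact .cons x ih

theorem Step.append_left {l l'} (h : Step l l') (m : List Ltr) : Step (m ++ l) (m ++ l') := by
  induction m with
  | nil => exact h
  | cons x _ ih => exact .cons x ih

theorem Eqv.append {l l' r r'} (h : Eqv l l') (h' : Eqv r r') : Eqv (l ++ r) (l' ++ r') :=
  .trans (h.lift (· ++ r) fun _ _ s => s.append_right r)
    (h'.lift (l' ++ ·) fun _ _ s => s.append_left l')

theorem ZPat.append {w} (h : ZPat w) (l r : List Ltr) : ZPat (l ++ w ++ r) := by
  have h1 : ZPat (w ++ r) := by
    induction h with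
    | here s h => exact .here _ h
    | cons x _ ih => exact .cons x ih
  rw [List.append_assoc]
  induction l with
  | nil => exact h1
  | cons x _ ih => exact .cons x ih

theorem Nul.append {w} (h : Nul w) (l r : List Ltr) : Nul (l ++ w ++ r) := by
  obtain ⟨w', h1, h2⟩ := h
  exact ⟨_, (Eqv.append (.refl (a := l)) h1).append (.refl (a := r)), h2.append l r⟩

theorem Nul.of_eqv {w w'} (h : Eqv w w') (h' : Nul w') : Nul w := by
  obtain ⟨w'', h1, h2⟩ := h'
  exact ⟨w'', h.trans h1, h2⟩

theorem Step.length {l l'} (h : Step l l') : l.length = l'.length := by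
  induction h with
  | here => rfl
  | cons x _ ih => simp [ih]

theorem Eqv.length {l l'} (h : Eqv l l') : l.length = l'.length := by
  induction h with
  | refl => rfl
  | tail _ h ih => exact ih.trans h.length

/-! ### The substitution preserves equality and zero -/

/-- The substitution sending a letter `(q, p)` to the block `(t0, q) (r1, p)`. -/
def phi (W : List Ltr) : List Ltr := W.flatMap fun a => [(t0, a.1), (r1, a.2)]

theorem phi_append (V W : List Ltr) : phi (V ++ W) = phi V ++ phi W := by simp [phi]

theorem phi_length (W : List Ltr) : (phi W).length = 2 * W.length := by
  induction W with
  | nil => rfl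
  | cons a W ih => simp only [phi, List.flatMap_cons] at ih ⊢; simp [ih]; omega

/-- The region with state `X Y`, whose left half carries `q₁ q₂` and right half `p₁ p₂`. -/
def reg (X Y q₁ q₂ p₁ p₂ : Ctl) : List Ltr := [(r0, q₁), (X, q₂), (Y, p₁), (r1, p₂)]

theorem Rule.eqv₂ {a b a' b'} (h : Rule a b a' b') : Eqv [a, b] [a', b'] :=
  .single (.here _ (.inl h))

theorem left_rule {X X' Y q₁ q₂ q₁' q₂' : Ctl} (p₁ p₂ : Ctl)
    (h : Rule (r0, q₁) (X, q₂) (r0, q₁') (X', q₂')) :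
    Eqv (reg X Y q₁ q₂ p₁ p₂) (reg X' Y q₁' q₂' p₁ p₂) :=
  .single (.here _ (.inl h))

theorem mid_rule {X X' Y Y' : Ctl} (q₁ q₂ p₁ p₂ : Ctl) (h : Rho X Y X' Y') :
    Eqv (reg X Y q₁ q₂ p₁ p₂) (reg X' Y' q₁ q₂ p₁ p₂) :=
  .single (.cons _ (.here _ (.inl (.ctl _ _ h))))

theorem right_rule {X Y Y' p₁ p₂ p₁' p₂' : Ctl} (q₁ q₂ : Ctl)
    (h : Rule (Y, p₁) (r1, p₂) (Y', p₁') (r1, p₂')) :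
    Eqv (reg X Y q₁ q₂ p₁ p₂) (reg X Y' q₁ q₂ p₁' p₂') :=
  .single (.cons _ (.cons _ (.here _ (.inl h))))

theorem left_zer {X q₁ q₂ : Ctl} (Y p₁ p₂ : Ctl) (h : Zer (r0, q₁) (X, q₂)) :
    Nul (reg X Y q₁ q₂ p₁ p₂) := ⟨_, .refl, .here _ h⟩

theorem right_zer {Y p₁ p₂ : Ctl} (X q₁ q₂ : Ctl) (h : Zer (Y, p₁) (r1, p₂)) :
    Nul (reg X Y q₁ q₂ p₁ p₂) := ⟨_, .refl, .cons _ (.cons _ (.here _ h))⟩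

/-- Two neighbouring blocks can be joined to an idle region. -/
theorem phi_reg (q₁ q₂ p₁ p₂ : Ctl) :
    Eqv (phi [(q₁, p₁), (q₂, p₂)]) (reg xE yN q₁ q₂ p₁ p₂) :=
  .head (.here _ (.inl (.ctl _ _ .free)))
    (.single (.cons _ (.here _ (.inl (.typ .join (.sw _ _))))))

/-- If the code guessed is correct, the region can verify any number of its bits. -/
theorem ck_true {c : Code} {q₁ q₂ : Ctl} (hc : HasTy c q₁ q₂) (p₁ p₂ : Ctl) (l : Fin 5) :
    Eqv (reg xE yN q₁ q₂ p₁ p₂) (reg (xck l c true) yN q₁ q₂ p₁ p₂) := by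
  obtain ⟨l, hl⟩ := l
  have key : ∀ m : Fin 5, Eqv (reg (xck m c false) yN q₁ q₂ p₁ p₂)
      (reg (xck m c true) yN q₁ q₂ p₁ p₂) := fun m =>
    left_rule _ _ (.typ (.ck m c) (.rd hc rfl))
  induction l with
  | zero => exact (left_rule _ _ (.ctl _ _ (.ck c))).trans (key 0)
  | succ l ih =>
    refine .trans ?_ (key _)
    exact (ih (by omega)).trans (left_rule _ _ (.ctl _ _ (.next _ ⟨l + 1, hl⟩ c rfl)))

/-- Every relation can be carried out on blocks. For a toggle, the region verifies its code,
acts on the right payloads, toggles the left payloads and undoes the verification with the code of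
the other side. -/
theorem lift_rule {a b a' b' : Ltr} (h : Rule a b a' b') : Eqv (phi [a, b]) (phi [a', b']) := by
  cases h with
  | @ctl q₁ q₂ q₁' q₂' p₁ p₂ h =>
    refine (phi_reg _ _ _ _).trans (.trans ?_ (phi_reg _ _ _ _).symm)
    exact ((left_rule _ _ (.ctl _ _ (.ra false))).trans
      (left_rule _ _ (.typ .ra (.rho h)))).trans (left_rule _ _ (.ctl _ _ (.ra true))).symm
  | @typ t q₁ q₂ q₁' q₂' p₁ p₂ p₁' p₂' h hp =>
    refine (phi_reg _ _ _ _).trans (.trans ?_ (phi_reg _ _ _ _).symm)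
    refine (ck_true h.src _ _ 4).trans ?_
    refine .trans ?_ (ck_true h.tgt _ _ 4).symm
    refine (mid_rule _ _ _ _ (.go t)).trans ?_
    refine (right_rule _ _ (.typ (.st t) hp)).trans ?_
    refine (mid_rule _ _ _ _ (.back t)).trans ?_
    refine (left_rule _ _ (.typ (.tg t) (.tau h))).trans ?_
    exact left_rule _ _ (.ctl _ _ (.fin t))

theorem lift_zer {a b : Ltr} (h : Zer a b) : Nul (phi [a, b]) := by
  cases h with
  | @adj q₁ q₂ p₁ p₂ h =>
    refine .of_eqv (phi_reg _ _ _ _) (.of_eqv (left_rule _ _ (.ctl _ _ (.ra false))) ?_)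
    exact left_zer _ _ _ (.bad Tog.ra.src (.rho h))
  | @bad c q₁ q₂ p₁ p₂ h hp =>
    refine .of_eqv ((phi_reg _ _ _ _).trans (ck_true h _ _ 4)) ?_
    obtain ⟨t, s⟩ := c
    cases s with
    | false =>
      refine .of_eqv (mid_rule _ _ _ _ (.go t)) ?_
      exact right_zer _ _ _ (.bad (Tog.st t).src hp)
    | true =>
      obtain ⟨_, _, h'⟩ := h.untog
      refine .of_eqv (left_rule _ _ (.ctl _ _ (.fin t))).symm ?_
      refine .of_eqv (left_rule _ _ (.typ (.tg t) (.tau h'))).symm ?_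
      refine .of_eqv (mid_rule _ _ _ _ (.back t)).symm ?_
      exact right_zer _ _ _ (.bad (Tog.st t).tgt hp)

theorem phi_cons (a : Ltr) (W : List Ltr) : phi (a :: W) = phi [a] ++ phi W := by simp [phi]

theorem phi_cons₂ (a b : Ltr) (W : List Ltr) : phi (a :: b :: W) = phi [a, b] ++ phi W := by
  simp [phi]

theorem lift_step {W W' : List Ltr} (h : Step W W') : Eqv (phi W) (phi W') := by
  induction h with
  | here r h =>
    rw [phi_cons₂, phi_cons₂]
    rcases h with h | h
    · exact (lift_rule h).append .refl
    · exact (lift_rule h).symm.append .refl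
  | @cons x l l' _ ih =>
    rw [phi_cons x l, phi_cons x l']
    exact Eqv.append .refl ih

theorem lift_eqv {W W' : List Ltr} (h : Eqv W W') : Eqv (phi W) (phi W') := by
  induction h with
  | refl => exact .refl
  | tail _ h ih => exact ih.trans (lift_step h)

theorem lift_nul {W : List Ltr} (h : Nul W) : Nul (phi W) := by
  obtain ⟨W', h1, h2⟩ := h
  refine .of_eqv (lift_eqv h1) ?_
  clear h1
  induction h2 with
  | here r h =>
    rw [phi_cons₂]
    exact (lift_zer h).append [] _
  | cons x _ ih =>
    rw [phi_cons]
    simpa using ih.append (phi [x]) []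

/-! ### Desubstitution of admissible words -/

/-- The region is zero or can be brought back to the idle state, perhaps with other payloads. -/
def Fine (X Y q₁ q₂ p₁ p₂ : Ctl) : Prop :=
  Nul (reg X Y q₁ q₂ p₁ p₂) ∨
    ∃ q₁' q₂' p₁' p₂', Eqv (reg X Y q₁ q₂ p₁ p₂) (reg xE yN q₁' q₂' p₁' p₂')

theorem Fine.of_eqv {X Y q₁ q₂ p₁ p₂ X' Y' q₁' q₂' p₁' p₂' : Ctl}
    (h : Eqv (reg X Y q₁ q₂ p₁ p₂) (reg X' Y' q₁' q₂' p₁' p₂'))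
    (h' : Fine X' Y' q₁' q₂' p₁' p₂') : Fine X Y q₁ q₂ p₁ p₂ := by
  rcases h' with h' | ⟨_, _, _, _, h'⟩
  · exact .inl (.of_eqv h h')
  · exact .inr ⟨_, _, _, _, h.trans h'⟩

theorem fine_xE (q₁ q₂ p₁ p₂ : Ctl) : Fine xE yN q₁ q₂ p₁ p₂ := .inr ⟨_, _, _, _, .refl⟩

theorem fine_xra (s : Bool) (q₁ q₂ p₁ p₂ : Ctl) : Fine (xra s) yN q₁ q₂ p₁ p₂ :=
  .of_eqv (left_rule _ _ (.ctl _ _ (.ra s))).symm (fine_xE ..)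

/-- A correct bit test can be undone, and an incorrect one makes the region zero. -/
theorem fine_xck (l : Fin 5) (c : Code) (s : Bool) (q₁ q₂ p₁ p₂ : Ctl) :
    Fine (xck l c s) yN q₁ q₂ p₁ p₂ := by
  obtain ⟨l, hl⟩ := l
  have key : ∀ m : Fin 5, Fine (xck m c false) yN q₁ q₂ p₁ p₂ →
      Fine (xck m c true) yN q₁ q₂ p₁ p₂ := fun m hm => by
    by_cases h : ∃ c', HasTy c' q₁ q₂ ∧ bit m c' = bit m c
    · obtain ⟨c', h1, h2⟩ := h
      exact .of_eqv (left_rule _ _ (.typ (.ck m c) (.rd h1 h2))).symm hm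
    · exact .inl (left_zer _ _ _ (.bad (Tog.ck m c).tgt (.rd fun c' h1 h2 => h ⟨c', h1, h2⟩)))
  induction l generalizing s with
  | zero =>
    have h0 : Fine (xck 0 c false) yN q₁ q₂ p₁ p₂ :=
      .of_eqv (left_rule _ _ (.ctl _ _ (.ck c))).symm (fine_xE ..)
    cases s
    · exact h0
    · exact key _ h0
  | succ l ih =>
    have h0 : Fine (xck ⟨l + 1, hl⟩ c false) yN q₁ q₂ p₁ p₂ :=
      .of_eqv (left_rule _ _ (.ctl _ _ (.next ⟨l, by omega⟩ _ c rfl))).symm (ih _ _)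
    cases s
    · exact h0
    · exact key _ h0

/-- Left payloads without a toggle make the region zero; otherwise the toggle can be performed, and
the verification of the code `(t, true)` can be undone, no matter whether the type was `t`. -/
theorem fine_xtg (t : Typ) (s : Bool) (q₁ q₂ p₁ p₂ : Ctl) : Fine (xtg t s) yN q₁ q₂ p₁ p₂ := by
  have h1 : ∀ q₁ q₂, Fine (xtg t true) yN q₁ q₂ p₁ p₂ := fun q₁ q₂ =>
    .of_eqv (left_rule _ _ (.ctl _ _ (.fin t))) (fine_xck ..)
  cases s with
  | true => exact h1 _ _
  | false =>
    by_cases h : ∃ t', HasTy (t', false) q₁ q₂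
    · obtain ⟨t', h⟩ := h
      obtain ⟨_, _, h⟩ := h.tog
      exact .of_eqv (left_rule _ _ (.typ (.tg t) (.tau h))) (h1 _ _)
    · exact .inl (left_zer _ _ _ (.bad (Tog.tg t).src (.tau fun t' h' => h ⟨t', h'⟩)))

theorem fine_yst (t : Typ) (s : Bool) (q₁ q₂ p₁ p₂ : Ctl) : Fine xN (yst t s) q₁ q₂ p₁ p₂ := by
  cases s with
  | true => exact .of_eqv (mid_rule _ _ _ _ (.back t)) (fine_xtg ..)
  | false => exact .of_eqv (mid_rule _ _ _ _ (.go t)).symm (fine_xck ..)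

/-- All pairs of neighbouring controls in the word are allowed. -/
def Adm : List Ltr → Prop
  | a :: b :: r => Adj a.1 b.1 ∧ Adm (b :: r)
  | _ => True

theorem not_adm {w} (h : ¬ Adm w) : Nul w := by
  suffices ZPat w from ⟨w, .refl, this⟩
  induction w with
  | nil => exact absurd trivial h
  | cons a w ih =>
    cases w with
    | nil => exact absurd trivial h
    | cons b w =>
      by_cases h1 : Adj a.1 b.1
      · exact .cons _ (ih fun h2 => h ⟨h1, h2⟩)
      · exact .here _ (.adj _ _ h1)

/-- The controls that start a free block or a region. -/
def Op (c : Ctl) : Prop := c = t0 ∨ c = r0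
/-- The controls that end a free block or a region. -/
def Cl (c : Ctl) : Prop := c = t1 ∨ c = r1

/-- The word is zero or equal to the image under `phi` of a word of half the length. -/
def Parsed (w : List Ltr) : Prop :=
  Nul w ∨ ∃ W, Eqv w (phi W) ∧ w.length = 2 * W.length

theorem Parsed.append {u v} (hu : Parsed u) (hv : Parsed v) : Parsed (u ++ v) := by
  rcases hu with hu | ⟨U, hu, lu⟩
  · exact .inl (hu.append [] v)
  rcases hv with hv | ⟨V, hv, lv⟩
  · left; simpa using hv.append u []
  · refine .inr ⟨U ++ V, ?_, ?_⟩
    · rw [phi_append]; exact hu.append hv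
    · simp [lu, lv]; omega

theorem Fine.parsed {X Y q₁ q₂ p₁ p₂} (h : Fine X Y q₁ q₂ p₁ p₂) :
    Parsed (reg X Y q₁ q₂ p₁ p₂) := by
  rcases h with h | ⟨q₁', q₂', p₁', p₂', h⟩
  · exact .inl h
  · exact .inr ⟨[(q₁', p₁'), (q₂', p₂')], h.trans (phi_reg ..).symm, rfl⟩

theorem Adj.open_of_close {a b} (h : Adj a b) (ha : Cl a) : Op b := by
  rcases ha with rfl | rfl <;> cases h <;> simp [Op]

theorem Adj.close_of_open {a b} (h : Adj a b) (hb : Op b) : Cl a := by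
  rcases hb with rfl | rfl <;> cases h <;> simp [Cl]

/-- An opening control followed by a control that does not close starts a region. -/
theorem mid_shape {a b : Ctl} (ho : Op a) (hab : Adj a b) (hb : ¬ Cl b) :
    a = r0 ∧ ∀ c, Adj b c → ¬ Cl c ∧ ∀ d, Adj c d →
      d = r1 ∧ ∀ q₁ q₂ p₁ p₂, Fine b c q₁ q₂ p₁ p₂ := by
  rcases ho with rfl | rfl
  · cases hab; exact absurd (.inr rfl) hb
  refine ⟨rfl, fun c hc => ?_⟩
  cases hab
  case free1 => exact absurd (.inl rfl) hb
  all_goals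
    cases hc
    refine ⟨by simp [Cl], fun d hd => ?_⟩
    cases hd
    refine ⟨rfl, ?_⟩
  · exact fine_xE
  · exact fine_yst _ _
  · exact fine_xra _
  · exact fine_xck _ _ _
  · exact fine_xtg _ _

/-- An admissible word from an opening to a closing letter is a sequence of free blocks and
regions, so it can be desubstituted unless it is zero. -/
theorem parse : ∀ (n : ℕ) (w : List Ltr), w.length ≤ n → Adm w →
    (∀ a ∈ w.head?, Op a.1) → (∀ a ∈ w.getLast?, Cl a.1) → Parsed w
  | _, [], _, _, _, _ => .inr ⟨[], .refl, rfl⟩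
  | _, [a], _, _, h1, h2 => by
    have h1 := h1 a (by simp)
    have h2 := h2 a (by simp)
    rcases h1 with h1 | h1 <;> rcases h2 with h2 | h2 <;> simp [h1] at h2
  | 0, _ :: _, h, _, _, _ => by simp at h
  | n + 1, (a, q) :: (b, p) :: w, hn, ha, h1, h2 => by
    have ho : Op a := h1 (a, q) (by simp)
    obtain ⟨ab, ha⟩ := ha
    simp only [List.length_cons] at hn
    -- peel off a closed prefix `u`
    have peel : ∀ (u : List Ltr) (e : Ltr) (w : List Ltr), Parsed (u ++ [e]) → Cl e.1 →
        Adm (e :: w) → w.length ≤ n → (∀ a ∈ (e :: w).getLast?, Cl a.1) →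
        Parsed (u ++ e :: w) := by
      intro u e w hu he hw hl hc
      have : Parsed w := by
        cases w with
        | nil => exact .inr ⟨[], .refl, rfl⟩
        | cons f w =>
          refine parse n _ hl hw.2 (fun a h => ?_) (fun a h => hc a ?_)
          · simp at h; subst h; exact hw.1.open_of_close he
          · simpa [List.getLast?_cons_cons] using h
      simpa using hu.append this
    by_cases hb : Cl b
    · refine peel [(a, q)] (b, p) w ?_ hb ha (by omega) ?_
      · right
        refine ⟨[(q, p)], ?_, rfl⟩
        rcases ho with rfl | rfl <;> rcases hb with rfl | rfl <;> try (cases ab; done)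
        · exact .refl
        · exact .single (.here _ (.inr (.ctl _ _ .free)))
      · simpa [List.getLast?_cons_cons] using h2
    · obtain ⟨rfl, hm⟩ := mid_shape ho ab hb
      match w, hn, ha, h2 with
      | [], _, _, h2 => exact absurd (h2 (b, p) (by simp)) hb
      | [(c, p')], _, ha, h2 => exact absurd (h2 (c, p') (by simp)) (hm c ha.1).1
      | (c, p') :: (d, q') :: w, hn, ha, h2 =>
        obtain ⟨rfl, hf⟩ := (hm c ha.1).2 d ha.2.1
        refine peel [(r0, q), (b, p), (c, p')] (r1, q') w (hf ..).parsed (.inr rfl) ha.2.2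
          (by simp at hn; omega) ?_
        simpa [List.getLast?_cons_cons] using h2

/-! ### Every word is nilpotent -/

/-- The `k`-th power of a word. -/
def pw (k : ℕ) (u : List Ltr) : List Ltr := (List.replicate k u).flatten

theorem pw_succ (k : ℕ) (u : List Ltr) : pw (k + 1) u = u ++ pw k u := by
  simp [pw, List.replicate_succ]

theorem Adm.right {w : List Ltr} (l : List Ltr) (h : Adm (l ++ w)) : Adm w := by
  induction l with
  | nil => exact h
  | cons a l ih =>
    apply ih
    cases hl : l ++ w with
    | nil => trivial
    | cons b r => rw [List.cons_append, hl] at h; exact h.2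

theorem Adm.left {w : List Ltr} (r : List Ltr) (h : Adm (w ++ r)) : Adm w := by
  induction w with
  | nil => trivial
  | cons a w ih =>
    cases w with
    | nil => trivial
    | cons b w => exact ⟨h.1, ih h.2⟩

/-- Among four consecutive controls of an admissible word one is opening. -/
theorem exists_op {a b c d : Ctl} (h1 : Adj a b) (h2 : Adj b c) (h3 : Adj c d) :
    Op a ∨ Op b ∨ Op c ∨ Op d := by
  cases h1 <;> first
    | (simp [Op]; done)
    | (cases h2 <;> first
        | (simp [Op]; done)
        | (cases h3 <;> simp [Op]))

theorem mem_pw {k : ℕ} {u : List Ltr} {a : Ltr} (h : a ∈ pw k u) : a ∈ u := by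
  simp only [pw, List.mem_flatten, List.mem_replicate] at h
  obtain ⟨_, ⟨_, rfl⟩, h⟩ := h
  exact h

theorem pw_rot (k : ℕ) (l m : List Ltr) : pw (k + 1) (l ++ m) = l ++ pw k (m ++ l) ++ m := by
  induction k with
  | zero => simp [pw]
  | succ k ih => rw [pw_succ, ih, pw_succ k]; simp

theorem phi_pw (k : ℕ) (W : List Ltr) : phi (pw k W) = pw k (phi W) := by
  induction k with
  | zero => rfl
  | succ k ih => rw [pw_succ, pw_succ, phi_append, ih]

theorem Eqv.pw {u v : List Ltr} (k : ℕ) (h : Eqv u v) : Eqv (pw k u) (pw k v) := by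
  induction k with
  | zero => exact .refl
  | succ k ih => rw [pw_succ, pw_succ]; exact h.append ih

/-- Every nonempty word has a power equal to zero, by induction on a bound for its length. -/
theorem nil_aux : ∀ (n : ℕ) (u : List Ltr), u.length ≤ n → u ≠ [] → ∃ k, Nul (pw k u)
  | 0, u, h, h0 => absurd (List.length_eq_zero_iff.1 (by omega)) h0
  | n + 1, u, hn, h0 => by
    by_cases ha : Adm (pw 4 u)
    swap
    · exact ⟨4, not_adm ha⟩
    obtain ⟨s, hs, ho⟩ : ∃ s ∈ u, Op s.1 := by
      have hmem : ∀ a ∈ pw 4 u, a ∈ u := fun a => mem_pw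
      have hl : 4 ≤ (pw 4 u).length := by
        have := List.length_pos_iff.2 h0
        simp [pw]; omega
      match pw 4 u, ha, hmem, hl with
      | a :: b :: c :: d :: w, ha, hmem, _ =>
        rcases exists_op ha.1 ha.2.1 ha.2.2.1 with h | h | h | h
        · exact ⟨a, hmem _ (by simp), h⟩
        · exact ⟨b, hmem _ (by simp), h⟩
        · exact ⟨c, hmem _ (by simp), h⟩
        · exact ⟨d, hmem _ (by simp), h⟩
    obtain ⟨l, r, rfl⟩ := List.append_of_mem hs
    -- the conjugate of `u` starting at `s` occurs in `u ^ 4`, followed by `s`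
    have hv : Adm (l ++ ((s :: r ++ l) ++ (s :: r))) := by
      apply Adm.left (pw 2 (l ++ s :: r))
      simpa [pw_succ, pw] using ha
    have hv := hv.right
    have hp : Parsed (s :: r ++ l) := by
      refine parse _ _ le_rfl hv.left (fun a h => ?_) (fun a h => ?_)
      · simp at h; subst h; exact ho
      · rw [← List.dropLast_append_getLast? a h, List.append_assoc] at hv
        exact hv.right.1.close_of_open ho
    rcases hp with hp | ⟨W, hW, hl⟩
    · refine ⟨2, ?_⟩
      rw [pw_rot]
      simpa [pw] using hp.append l (s :: r)
    · simp only [List.length_append, List.length_cons] at hn hl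
      obtain ⟨k, hk⟩ := nil_aux n W (by omega) (by rintro rfl; simp at hl)
      refine ⟨k + 1, ?_⟩
      rw [pw_rot]
      refine Nul.append (.of_eqv (hW.pw k) ?_) _ _
      rw [← phi_pw]
      exact lift_nul hk

/-! ### The substitution reflects zero -/

/-- The pair `a b` has a code, and that code agrees with `c` in bit `l`. -/
def Match (l : Fin 5) (c : Code) (a b : Ctl) : Prop := ∃ c', HasTy c' a b ∧ bit l c' = bit l c

theorem hasTy_of_match {c : Code} {a b : Ctl} (h : ∀ l, Match l c a b) : HasTy c a b := by
  obtain ⟨c', h1, _⟩ := h 0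
  have : c' = c := by
    refine bit_inj fun l => ?_
    obtain ⟨c'', h2, h3⟩ := h l
    rw [h1.unique h2, h3]
  exact this ▸ h1

/-- `Dec X Y a b A B`: a region in state `X Y` with left payloads `a b` stands for two letters with
controls `A B`. As the action on the right payloads comes before the toggle of `a b`, in the states
between the two the controls `A B` are already the result of the toggle. -/
inductive Dec : Ctl → Ctl → Ctl → Ctl → Ctl → Ctl → Prop
  | xE (a b) : Dec xE yN a b a b
  | xra (s a b) : Dec (xra s) yN a b a b
  | xck (l c s a b) (h : ∀ l' < l, Match l' c a b) (h' : s = true → Match l c a b) :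
      Dec (xck l c s) yN a b a b
  | st0 (t a b) (h : HasTy (t, false) a b) : Dec xN (yst t false) a b a b
  | st1 {t a b A B} (h : Tog t a b A B) : Dec xN (yst t true) a b A B
  | tg0 {t a b A B} (h : Tog t a b A B) : Dec (xtg t false) yN a b A B
  | tg1 (t a b) (h : HasTy (t, true) a b) : Dec (xtg t true) yN a b a b

/-- `Rep c W`: the word `c` is a sequence of free blocks and regions that stands for `W`. -/
inductive Rep : List Ltr → List Ltr → Prop
  | nil : Rep [] []
  | blk0 (q p) {c W} (h : Rep c W) : Rep ((t0, q) :: (r1, p) :: c) ((q, p) :: W)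
  | blk1 (q p) {c W} (h : Rep c W) : Rep ((r0, q) :: (t1, p) :: c) ((q, p) :: W)
  | reg {X Y a b A B} (p q) {c W} (hd : Dec X Y a b A B) (h : Rep c W) :
      Rep ((r0, a) :: (X, b) :: (Y, p) :: (r1, q) :: c) ((A, p) :: (B, q) :: W)

/-- One relation between two-letter words, used in either direction, written out in terms of
controls and payloads. -/
inductive Move (a p b q a' p' b' q' : Ctl) : Prop
  | rho (h : Rho a b a' b') (hp : p' = p) (hq : q' = q)
  | rho_inv (h : Rho a' b' a b) (hp : p' = p) (hq : q' = q)
  | tog {t} (h : Tog t a b a' b') (hp : Pay t p q p' q')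
  | tog_inv {t} (h : Tog t a' b' a b) (hp : Pay t p' q' p q)

theorem SRule.move {a p b q : Ctl} {u v : Ltr} (h : SRule (a, p) (b, q) u v) :
    Move a p b q u.1 u.2 v.1 v.2 := by
  rcases h with h | h <;> cases h with
  | ctl _ _ h => first | exact .rho h rfl rfl | exact .rho_inv h rfl rfl
  | typ h hp => first | exact .tog h hp | exact .tog_inv h hp

theorem Zer.inv {a p b q : Ctl} (h : Zer (a, p) (b, q)) : ¬ Adj a b ∨
    (∃ t a' b', Tog t a b a' b' ∧ Bad (t, false) p q) ∨
    (∃ t a' b', Tog t a' b' a b ∧ Bad (t, true) p q) := by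
  cases h with
  | adj _ _ h => exact .inl h
  | @bad c _ _ _ _ h hb =>
    obtain ⟨t, s⟩ := c
    cases s
    · obtain ⟨_, _, h⟩ := h.tog
      exact .inr (.inl ⟨_, _, _, h, hb⟩)
    · obtain ⟨_, _, h⟩ := h.untog
      exact .inr (.inr ⟨_, _, _, h, hb⟩)

/-- A relation on the left half of a region keeps the simulated pair fixed or applies to it a
control move. -/
theorem dec_left {X Y a b A B a₁ b₁ X₁ R : Ctl} (hd : Dec X Y a b A B)
    (h : Move r0 a X b R a₁ X₁ b₁) :
    R = r0 ∧ ∃ A₁ B₁, Dec X₁ Y a₁ b₁ A₁ B₁ ∧ ∀ p q, Eqv [(A, p), (B, q)] [(A₁, p), (B₁, q)] := by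
  cases h with
  | rho h hp hq =>
    subst hp hq
    cases h with
    | ra s => cases hd; exact ⟨rfl, _, _, .xra .., fun _ _ => .refl⟩
    | ck c =>
      cases hd
      exact ⟨rfl, _, _, .xck _ _ _ _ _ (fun l' h => absurd h (by simp)) (by simp), fun _ _ => .refl⟩
    | next l l' c h =>
      cases hd with
      | xck _ _ _ _ _ h1 h2 =>
      refine ⟨rfl, _, _, .xck _ _ _ _ _ (fun m hm => ?_) (by simp), fun _ _ => .refl⟩
      have hml : m ≤ l := by simp only [Fin.lt_def, Fin.le_def] at *; omega
      rcases lt_or_eq_of_le hml with h | rfl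
      · exact h1 _ h
      · exact h2 rfl
    | fin t =>
      cases hd with
      | tg1 _ _ _ h =>
      exact ⟨rfl, _, _, .xck _ _ _ _ _ (fun l _ => ⟨_, h, rfl⟩) (fun _ => ⟨_, h, rfl⟩),
        fun _ _ => .refl⟩
  | rho_inv h hp hq =>
    subst hp hq
    cases h with
    | free => cases hd
    | ra s => cases hd; exact ⟨rfl, _, _, .xE .., fun _ _ => .refl⟩
    | ck c => cases hd; exact ⟨rfl, _, _, .xE .., fun _ _ => .refl⟩
    | next l l' c h =>
      cases hd with
      | xck _ _ _ _ _ h1 h2 =>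
      refine ⟨rfl, _, _, .xck _ _ _ _ _ (fun m hm => h1 _ ?_) (fun _ => h1 _ ?_), fun _ _ => .refl⟩
      all_goals simp only [Fin.lt_def] at *; omega
    | fin t =>
      cases hd with
      | xck _ _ _ _ _ h1 h2 =>
      refine ⟨rfl, _, _, .tg1 _ _ _ (hasTy_of_match fun l => ?_), fun _ _ => .refl⟩
      rcases lt_or_eq_of_le (show l ≤ 4 from Fin.le_last l) with h | rfl
      · exact h1 _ h
      · exact h2 rfl
  | tog h hp =>
    cases h with
    | ra =>
      cases hd
      cases hp with
      | rho hp => exact ⟨rfl, _, _, .xra .., fun p q => (Rule.ctl p q hp).eqv₂⟩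
    | ck l c =>
      cases hd with
      | xck _ _ _ _ _ h1 h2 =>
      cases hp with
      | rd h3 h4 => exact ⟨rfl, _, _, .xck _ _ _ _ _ h1 fun _ => ⟨_, h3, h4⟩, fun _ _ => .refl⟩
    | tg t =>
      cases hd with
      | tg0 h1 =>
      cases hp with
      | tau h2 =>
      obtain ⟨rfl, rfl, rfl⟩ := h1.right_unique h2
      exact ⟨rfl, _, _, .tg1 _ _ _ h1.tgt, fun _ _ => .refl⟩
  | tog_inv h hp =>
    cases h with
    | ra =>
      cases hd
      cases hp with
      | rho hp => exact ⟨rfl, _, _, .xra .., fun p q => (Rule.ctl p q hp).eqv₂.symm⟩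
    | ck l c =>
      cases hd with
      | xck _ _ _ _ _ h1 h2 =>
      cases hp with
      | rd h3 h4 => exact ⟨rfl, _, _, .xck _ _ _ _ _ h1 (by simp), fun _ _ => .refl⟩
    | tg t =>
      cases hd with
      | tg1 _ _ _ h1 =>
      cases hp with
      | tau h2 =>
      -- the toggle undone has type `t`, as the code of the left payloads is `(t, true)`
      have := h1.unique h2.tgt
      simp only [Prod.mk.injEq, and_true] at this
      subst this
      exact ⟨rfl, _, _, .tg0 h2, fun _ _ => .refl⟩

/-- A relation on the middle of a region keeps the simulated pair fixed, and may split the region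
into two free blocks. -/
theorem dec_mid {X Y a b A B p X₁ b₁ Y₁ p₁ : Ctl} (hd : Dec X Y a b A B)
    (h : Move X b Y p X₁ b₁ Y₁ p₁) :
    (b₁ = b ∧ p₁ = p ∧ Dec X₁ Y₁ a b A B) ∨
    (X₁ = t1 ∧ Y₁ = t0 ∧ b₁ = p ∧ p₁ = b ∧ A = a ∧ B = b) := by
  cases h with
  | rho h hp hq =>
    subst hp hq
    cases h with
    | go t =>
      cases hd with
      | xck _ _ _ _ _ h1 h2 =>
      refine .inl ⟨rfl, rfl, .st0 _ _ _ (hasTy_of_match fun l => ?_)⟩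
      rcases lt_or_eq_of_le (show l ≤ 4 from Fin.le_last l) with h | rfl
      · exact h1 _ h
      · exact h2 rfl
    | back t =>
      cases hd with
      | st1 h => exact .inl ⟨rfl, rfl, .tg0 h⟩
    | _ => cases hd
  | rho_inv h hp hq =>
    subst hp hq
    cases h with
    | go t =>
      cases hd with
      | st0 _ _ _ h =>
      exact .inl ⟨rfl, rfl, .xck _ _ _ _ _ (fun l _ => ⟨_, h, rfl⟩) (fun _ => ⟨_, h, rfl⟩)⟩
    | back t =>
      cases hd with
      | tg0 h => exact .inl ⟨rfl, rfl, .st1 h⟩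
    | _ => cases hd
  | tog h hp => cases h <;> cases hd
  | tog_inv h hp =>
    cases h with
    | join =>
      cases hd
      cases hp
      exact .inr ⟨rfl, rfl, rfl, rfl, rfl, rfl⟩
    | _ => cases hd

/-- A relation on the right half of a region applies to the simulated pair the toggle of its
controls, in one direction or the other. -/
theorem dec_right {X Y a b A B p q Y₁ p₁ R q₁ : Ctl} (hd : Dec X Y a b A B)
    (h : Move Y p r1 q Y₁ p₁ R q₁) :
    R = r1 ∧ ∃ A₁ B₁, Dec X Y₁ a b A₁ B₁ ∧ Eqv [(A, p), (B, q)] [(A₁, p₁), (B₁, q₁)] := by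
  cases h with
  | rho h => cases h; cases hd
  | rho_inv h => cases h
  | tog h hp =>
    cases h
    cases hd with
    | st0 _ _ _ h =>
    obtain ⟨A₁, B₁, h⟩ := h.tog
    exact ⟨rfl, _, _, .st1 h, (Rule.typ h hp).eqv₂⟩
  | tog_inv h hp =>
    cases h
    cases hd with
    | st1 h => exact ⟨rfl, _, _, .st0 _ _ _ h.src, (Rule.typ h hp).eqv₂.symm⟩

theorem Dec.adj {X Y a b A B} (hd : Dec X Y a b A B) : Adj r0 X ∧ Adj X Y ∧ Adj Y r1 := by
  cases hd <;> exact ⟨by constructor, by constructor, by constructor⟩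

theorem dec_zer_left {X Y a b A B} (hd : Dec X Y a b A B) (h : Zer (r0, a) (X, b)) (p q : Ctl) :
    Nul [(A, p), (B, q)] := by
  rcases h.inv with h | ⟨t, _, _, h, hb⟩ | ⟨t, _, _, h, hb⟩
  · exact absurd hd.adj.1 h
  · cases h with
    | ra =>
      cases hd
      cases hb with
      | rho hb => exact ⟨_, .refl, .here _ (.adj _ _ hb)⟩
    | ck => cases hb
    | tg =>
      cases hd with
      | tg0 h =>
      cases hb with
      | tau hb => exact absurd h.src (hb _)
  · cases h with
    | ck =>
      cases hd with
      | xck _ _ _ _ _ h1 h2 =>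
      cases hb with
      | rd hb =>
      obtain ⟨c', h3, h4⟩ := h2 rfl
      exact absurd h4 (hb _ h3)
    | _ => cases hb

theorem dec_zer_mid {X Y a b A B p} (hd : Dec X Y a b A B) (h : Zer (X, b) (Y, p)) : False := by
  rcases h.inv with h | ⟨t, _, _, h, hb⟩ | ⟨t, _, _, h, hb⟩
  · exact h hd.adj.2.1
  · cases h <;> cases hd
  · cases h <;> first | cases hb; done | cases hd

theorem dec_zer_right {X Y a b A B p q} (hd : Dec X Y a b A B) (h : Zer (Y, p) (r1, q)) :
    Nul [(A, p), (B, q)] := by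
  rcases h.inv with h | ⟨t, _, _, h, hb⟩ | ⟨t, _, _, h, hb⟩
  · exact absurd hd.adj.2.2 h
  · cases h
    cases hd with
    | st0 _ _ _ h => exact ⟨_, .refl, .here _ (.bad h hb)⟩
  · cases h
    cases hd with
    | st1 h => exact ⟨_, .refl, .here _ (.bad h.tgt hb)⟩

theorem Rep.head {c W} (h : Rep c W) : ∀ a ∈ c.head?, Op a.1 := by
  cases h <;> simp [Op]

/-- Joining two blocks is the only relation across the boundary between blocks or regions. -/
theorem no_move {a p b q a' p' b' q' : Ctl} (ha : Cl a) (hb : Op b) (hab : ¬ (a = t1 ∧ b = t0))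
    (h : Move a p b q a' p' b' q') : False := by
  rcases ha with rfl | rfl <;> rcases hb with rfl | rfl <;> simp at hab <;>
    cases h with
    | rho h => cases h
    | rho_inv h => cases h
    | tog h => cases h
    | tog_inv h => cases h

theorem no_zer {a p b q : Ctl} (ha : Cl a) (hb : Op b) (h : Zer (a, p) (b, q)) : False := by
  rcases h.inv with h | ⟨t, _, _, h, hz⟩ | ⟨t, _, _, h, hz⟩
  · refine h ?_
    rcases ha with rfl | rfl <;> rcases hb with rfl | rfl <;> constructor
  all_goals rcases ha with rfl | rfl <;> rcases hb with rfl | rfl <;> cases h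
  cases hz

/-- A relation applied to a closing letter followed by blocks and regions takes place further
right, or joins the next block to the one that ends in the closing letter. -/
theorem step_close {a p : Ctl} {c c' W} (ha : Cl a) (hr : Rep c W)
    (h : Step ((a, p) :: c) c') :
    (∃ d, c' = (a, p) :: d ∧ Step c d) ∨
    ∃ q r, a = t1 ∧ c = (t0, q) :: r ∧ c' = (xE, q) :: (yN, p) :: r := by
  cases h with
  | cons _ h => exact .inl ⟨_, rfl, h⟩
  | @here _ b u v r h =>
    obtain ⟨b, q⟩ := b
    have hb : Op b := hr.head (b, q) (by simp)
    by_cases hab : a = t1 ∧ b = t0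
    · obtain ⟨rfl, rfl⟩ := hab
      right
      refine ⟨q, r, rfl, rfl, ?_⟩
      obtain ⟨u₁, u₂⟩ := u
      obtain ⟨v₁, v₂⟩ := v
      cases h.move with
      | rho h => cases h
      | rho_inv h => cases h
      | tog h hp => cases h; cases hp; rfl
      | tog_inv h => cases h
    · exact (no_move ha hb hab h.move).elim

theorem move_blk0 {q p u q' v p' : Ctl} (h : Move t0 q r1 p u q' v p') :
    u = r0 ∧ v = t1 ∧ q' = q ∧ p' = p := by
  cases h with
  | rho h hp hq => cases h; exact ⟨rfl, rfl, hp, hq⟩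
  | rho_inv h => cases h
  | tog h => cases h
  | tog_inv h => cases h

theorem move_blk1 {q p u q' v p' : Ctl} (h : Move r0 q t1 p u q' v p') :
    u = t0 ∧ v = r1 ∧ q' = q ∧ p' = p := by
  cases h with
  | rho h => cases h
  | rho_inv h hp hq => cases h; exact ⟨rfl, rfl, hp, hq⟩
  | tog h => cases h
  | tog_inv h => cases h

/-- Every step on a word is the effect of some steps on the word it stands for. -/
theorem sim {c W c'} (h : Rep c W) (hs : Step c c') : ∃ W', Rep c' W' ∧ Eqv W W' := by
  induction h generalizing c' with
  | nil => cases hs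
  | @blk0 q p c W h ih =>
    cases hs with
    | @here _ _ u v _ h' =>
      obtain ⟨_, _⟩ := u
      obtain ⟨_, _⟩ := v
      obtain ⟨rfl, rfl, rfl, rfl⟩ := move_blk0 h'.move
      exact ⟨_, .blk1 _ _ h, .refl⟩
    | cons _ hs =>
      rcases step_close (.inr rfl) h hs with ⟨d, rfl, hd₁⟩ | ⟨_, _, h', _⟩
      · obtain ⟨W', h1, h2⟩ := ih hd₁
        exact ⟨_, .blk0 _ _ h1, Eqv.append (.refl (a := [(q, p)])) h2⟩
      · cases h'
  | @blk1 q p c W h ih =>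
    cases hs with
    | @here _ _ u v _ h' =>
      obtain ⟨_, _⟩ := u
      obtain ⟨_, _⟩ := v
      obtain ⟨rfl, rfl, rfl, rfl⟩ := move_blk1 h'.move
      exact ⟨_, .blk0 _ _ h, .refl⟩
    | cons _ hs =>
      rcases step_close (.inl rfl) h hs with ⟨d, rfl, hd₁⟩ | ⟨b, r, _, rfl, rfl⟩
      · obtain ⟨W', h1, h2⟩ := ih hd₁
        exact ⟨_, .blk1 _ _ h1, Eqv.append (.refl (a := [(q, p)])) h2⟩
      · cases h with
        | blk0 _ p₂ h => exact ⟨_, .reg _ _ (.xE _ _) h, .refl⟩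
  | @reg X Y a b A B p q c W hd h ih =>
    cases hs with
    | @here _ _ u v _ h' =>
      obtain ⟨_, _⟩ := u
      obtain ⟨_, _⟩ := v
      obtain ⟨rfl, A₁, B₁, h1, h2⟩ := dec_left hd h'.move
      exact ⟨_, .reg _ _ h1 h, (h2 p q).append .refl⟩
    | cons _ hs =>
    cases hs with
    | @here _ _ u v _ h' =>
      obtain ⟨_, _⟩ := u
      obtain ⟨_, _⟩ := v
      rcases dec_mid hd h'.move with ⟨rfl, rfl, h1⟩ | ⟨rfl, rfl, rfl, rfl, rfl, rfl⟩
      · exact ⟨_, .reg _ _ h1 h, .refl⟩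
      · exact ⟨_, .blk1 _ _ (.blk0 _ _ h), .refl⟩
    | cons _ hs =>
    cases hs with
    | @here _ _ u v _ h' =>
      obtain ⟨_, _⟩ := u
      obtain ⟨_, _⟩ := v
      obtain ⟨rfl, A₁, B₁, h1, h2⟩ := dec_right hd h'.move
      exact ⟨_, .reg _ _ h1 h, h2.append .refl⟩
    | cons _ hs =>
      rcases step_close (.inr rfl) h hs with ⟨d, rfl, hd₁⟩ | ⟨_, _, h', _⟩
      · obtain ⟨W', h1, h2⟩ := ih hd₁
        exact ⟨_, .reg _ _ hd h1, Eqv.append (.refl (a := [(A, p), (B, q)])) h2⟩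
      · cases h'

theorem zpat_close {a p : Ctl} {c W} (ha : Cl a) (hr : Rep c W) (h : ZPat ((a, p) :: c)) :
    ZPat c := by
  cases h with
  | cons _ h => exact h
  | @here _ b r h => exact (no_zer ha (hr.head b (by simp)) h).elim

/-- If a word contains a zero pair, then the word it stands for is zero. -/
theorem rep_zpat {c W} (h : Rep c W) (hz : ZPat c) : Nul W := by
  induction h with
  | nil => cases hz
  | @blk0 q p c W h ih =>
    cases hz with
    | here _ h' =>
      rcases h'.inv with h | ⟨_, _, _, h, _⟩ | ⟨_, _, _, h, _⟩
      · exact absurd .free0 h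
      all_goals cases h
    | cons _ hz => simpa using (ih (zpat_close (.inr rfl) h hz)).append [(q, p)] []
  | @blk1 q p c W h ih =>
    cases hz with
    | here _ h' =>
      rcases h'.inv with h | ⟨_, _, _, h, _⟩ | ⟨_, _, _, h, _⟩
      · exact absurd .free1 h
      all_goals cases h
    | cons _ hz => simpa using (ih (zpat_close (.inl rfl) h hz)).append [(q, p)] []
  | @reg X Y a b A B p q c W hd h ih =>
    cases hz with
    | here _ h' => exact (dec_zer_left hd h' p q).append [] W
    | cons _ hz =>
    cases hz with
    | here _ h' => exact (dec_zer_mid hd h').elim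
    | cons _ hz =>
    cases hz with
    | here _ h' => exact (dec_zer_right hd h').append [] W
    | cons _ hz => simpa using (ih (zpat_close (.inr rfl) h hz)).append [(A, p), (B, q)] []

theorem rep_phi (W : List Ltr) : Rep (phi W) W := by
  induction W with
  | nil => exact .nil
  | cons a W ih => exact .blk0 _ _ ih

theorem unlift_nul {W : List Ltr} (h : Nul (phi W)) : Nul W := by
  obtain ⟨c, h1, h2⟩ := h
  have : ∃ V, Rep c V ∧ Eqv W V := by
    clear h2
    induction h1 with
    | refl => exact ⟨W, rep_phi W, .refl⟩
    | tail _ h ih =>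
      obtain ⟨V, h3, h4⟩ := ih
      obtain ⟨V', h5, h6⟩ := sim h3 h
      exact ⟨V', h5, h4.trans h6⟩
  obtain ⟨V, h3, h4⟩ := this
  exact .of_eqv h4 (rep_zpat h3 h2)

/-- A sequence of words that are not zero and whose lengths are the powers of two. -/
def long (n : ℕ) : List Ltr := phi^[n] [(t0, t0)]

theorem long_length (n : ℕ) : (long n).length = 2 ^ n := by
  induction n with
  | zero => rfl
  | succ n ih => rw [long, Function.iterate_succ_apply', phi_length, ← long, ih, pow_succ']

theorem long_not_nul (n : ℕ) : ¬ Nul (long n) := by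
  induction n with
  | zero =>
    rintro ⟨w, h1, h2⟩
    have := h1.length
    cases h2 with
    | here => simp [long] at this
    | @cons _ l h =>
      cases h <;> simp [long] at this
  | succ n ih =>
    rw [long, Function.iterate_succ_apply']
    exact fun h => ih (unlift_nul h)

/-! ### From words to the finitely presented semigroup -/

section Transfer

variable {n : ℕ} (e : Option Ltr ≃ Fin n)

/-- The free semigroup on `n` generators. -/
abbrev F (n : ℕ) := FreeSemigroup (Fin n)

/-- The generator of a letter; `none` is the letter for zero. -/
def gen (x : Option Ltr) : F n := FreeSemigroup.of (e x)

/-- The defining relations: `none` is a zero element, and the relations between letters. -/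
inductive Rel : F n → F n → Prop
  | zl (x) : Rel (gen e none * gen e x) (gen e none)
  | zr (x) : Rel (gen e x * gen e none) (gen e none)
  | rule {a b a' b'} (h : Rule a b a' b') :
      Rel (gen e (some a) * gen e (some b)) (gen e (some a') * gen e (some b'))
  | zer {a b} (h : Zer a b) : Rel (gen e (some a) * gen e (some b)) (gen e none)

def rels : Set (F n × F n) := {r | Rel e r.1 r.2}

theorem rels_finite : (rels e).Finite := by
  have h1 : (Set.range fun x : Fin n × Fin n =>
      FreeSemigroup.of x.1 * FreeSemigroup.of x.2).Finite := Set.finite_range _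
  have h2 : (Set.range fun x : Fin n => FreeSemigroup.of x).Finite := Set.finite_range _
  refine ((h1.union h2).prod (h1.union h2)).subset ?_
  rintro ⟨u, v⟩ h
  have g2 : ∀ a, gen e a ∈ (Set.range fun x : Fin n => FreeSemigroup.of x) := fun a => ⟨e a, rfl⟩
  have g1 : ∀ a b, gen e a * gen e b ∈ (Set.range fun x : Fin n × Fin n =>
      FreeSemigroup.of x.1 * FreeSemigroup.of x.2) := fun a b => ⟨(e a, e b), rfl⟩
  cases h with
  | zl x => exact ⟨.inl (g1 _ _), .inr (g2 _)⟩
  | zr x => exact ⟨.inl (g1 _ _), .inr (g2 _)⟩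
  | rule h => exact ⟨.inl (g1 _ _), .inl (g1 _ _)⟩
  | zer h => exact ⟨.inl (g1 _ _), .inr (g2 _)⟩

/-- The congruence generated by the defining relations. -/
abbrev con : Con (F n) := conGen fun u v => (u, v) ∈ rels e
/-- The semigroup presented by the defining relations. -/
abbrev S := (con e).Quotient

/-- The element represented by a letter. -/
def cl (x : Option Ltr) : S e := (gen e x : F n)

theorem sound {u v : F n} (h : Rel e u v) : ((u : F n) : S e) = v :=
  (Con.eq _).2 (ConGen.Rel.of _ _ h)

theorem S_induction {P : S e → Prop} (h1 : ∀ x, P (cl e x)) (h2 : ∀ x s, P s → P (cl e x * s))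
    (s : S e) : P s := by
  induction s using Con.induction_on with
  | H w =>
    induction w using FreeSemigroup.recOnMul with
    | ih1 x => simpa [cl, gen] using h1 (e.symm x)
    | ih2 x y _ hy => simpa [cl, gen] using h2 (e.symm x) _ hy

theorem zero_mul' (s : S e) : cl e none * s = cl e none := by
  induction s using S_induction with
  | h1 x => exact sound e (.zl x)
  | h2 x s ih => rw [← mul_assoc, show cl e none * cl e x = cl e none from sound e (.zl x), ih]

theorem mul_zero' (s : S e) : s * cl e none = cl e none := by
  induction s using S_induction with
  | h1 x => exact sound e (.zr x)
  | h2 x s ih => rw [mul_assoc, ih]; exact sound e (.zr x)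

/-- The product of a word of nonzero letters, with a unit adjoined for the empty word. -/
def ev (w : List Ltr) : WithOne (S e) := (w.map fun a => (cl e (some a) : WithOne (S e))).prod

theorem ev_cons (a : Ltr) (w : List Ltr) : ev e (a :: w) = cl e (some a) * ev e w := rfl

theorem ev_append (u v : List Ltr) : ev e (u ++ v) = ev e u * ev e v := by simp [ev]

theorem ev_step {u v : List Ltr} (h : Step u v) : ev e u = ev e v := by
  have key : ∀ {a b a' b'}, Rule a b a' b' → (cl e (some a) * cl e (some b) : WithOne (S e)) =
      cl e (some a') * cl e (some b') := fun h => by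
    rw [← WithOne.coe_mul, ← WithOne.coe_mul]
    exact congrArg _ (sound e (.rule h))
  induction h with
  | here r h =>
    simp only [ev_cons, ← mul_assoc]
    rcases h with h | h
    · rw [key h]
    · rw [key h]
  | cons x _ ih => rw [ev_cons, ev_cons, ih]

theorem zero_mul_one (s : WithOne (S e)) : (cl e none : WithOne (S e)) * s = cl e none := by
  induction s using WithOne.recOneCoe with
  | one => simp
  | coe s => rw [← WithOne.coe_mul, zero_mul']

theorem ev_zpat {u : List Ltr} (h : ZPat u) : ev e u = cl e none := by
  induction h with
  | @here a b r h =>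
    rw [ev_cons, ev_cons, ← mul_assoc, ← WithOne.coe_mul,
      show cl e (some a) * cl e (some b) = cl e none from sound e (.zer h), zero_mul_one]
  | cons x _ ih => rw [ev_cons, ih, ← WithOne.coe_mul, mul_zero']

theorem ev_nul {u : List Ltr} (h : Nul u) : ev e u = cl e none := by
  obtain ⟨v, h1, h2⟩ := h
  rw [← ev_zpat e h2]
  clear h2
  induction h1 with
  | refl => rfl
  | tail _ h ih => rw [ih, ev_step e h]

theorem zero_or_ev (s : S e) : s = cl e none ∨ ∃ u ≠ [], (s : WithOne (S e)) = ev e u := by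
  induction s using S_induction with
  | h1 x =>
    cases x with
    | none => exact .inl rfl
    | some a => exact .inr ⟨[a], by simp, by simp [ev]⟩
  | h2 x s ih =>
    cases x with
    | none => exact .inl (zero_mul' e s)
    | some a =>
      rcases ih with rfl | ⟨u, _, h⟩
      · exact .inl (mul_zero' e _)
      · exact .inr ⟨a :: u, by simp, by rw [WithOne.coe_mul, h, ev_cons]⟩

theorem coe_iterMul (s : S e) (k : ℕ) :
    ((iterMul s k : S e) : WithOne (S e)) = (s : WithOne (S e)) ^ (k + 1) := by
  induction k with
  | zero => simp [iterMul]
  | succ k ih => rw [iterMul, WithOne.coe_mul, ih, ← pow_succ]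

theorem ev_pw (k : ℕ) (u : List Ltr) : ev e (pw k u) = ev e u ^ k := by
  induction k with
  | zero => rfl
  | succ k ih => rw [pw_succ, ev_append, ih, pow_succ']

theorem nil_S (s : S e) : ∃ k, iterMul s k = cl e none := by
  rcases zero_or_ev e s with rfl | ⟨u, hu, h⟩
  · exact ⟨0, rfl⟩
  · obtain ⟨k, hk⟩ := nil_aux _ u le_rfl hu
    have hk := ev_nul e hk
    rw [ev_pw] at hk
    refine ⟨k, WithOne.coe_injective ?_⟩
    rw [coe_iterMul, h, pow_succ, hk, zero_mul_one]

/-- The letters of an element of the free semigroup. -/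
def toL (w : F n) : List (Option Ltr) := (w.head :: w.tail).map e.symm

theorem toL_mul (u v : F n) : toL e (u * v) = toL e u ++ toL e v := by
  simp [toL]

theorem toL_gen (x : Option Ltr) : toL e (gen e x) = [x] := by
  simp [toL, gen]

/-- The word contains the letter zero or can be brought to zero. -/
def Dead (w : List (Option Ltr)) : Prop := none ∈ w ∨ ∃ u, w = u.map some ∧ Nul u

/-- The explicit description of equality in the semigroup: both words are zero, or they agree, or
they are connected by relations that do not involve zero. -/
def Same (v w : List (Option Ltr)) : Prop :=
  (Dead v ∧ Dead w) ∨ v = w ∨ ∃ u u', v = u.map some ∧ w = u'.map some ∧ Eqv u u'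

theorem exists_map {w : List (Option Ltr)} (h : none ∉ w) : ∃ u : List Ltr, w = u.map some := by
  induction w with
  | nil => exact ⟨[], rfl⟩
  | cons a w ih =>
    simp only [List.mem_cons, not_or] at h
    obtain ⟨u, rfl⟩ := ih h.2
    cases a with
    | none => exact absurd rfl h.1
    | some a => exact ⟨a :: u, rfl⟩

theorem map_inj {u v : List Ltr} (h : u.map some = v.map some) : u = v :=
  List.map_injective_iff.2 (Option.some_injective _) h

theorem same_map {u v : List Ltr} (h : Eqv u v) : Same (u.map some) (v.map some) :=
  .inr (.inr ⟨_, _, rfl, rfl, h⟩)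

theorem Dead.of_eqv {u v : List Ltr} (h : Eqv u v) (hv : Dead (v.map some)) :
    Dead (u.map some) := by
  rcases hv with hv | ⟨w, hw, hn⟩
  · simp at hv
  · cases map_inj hw
    exact .inr ⟨u, rfl, .of_eqv h hn⟩

theorem Dead.append {w : List (Option Ltr)} (h : Dead w) (l r : List (Option Ltr)) :
    Dead (l ++ w ++ r) := by
  by_cases hn : none ∈ l ++ w ++ r
  · exact .inl hn
  · simp only [List.mem_append, not_or] at hn
    obtain ⟨l, rfl⟩ := exists_map hn.1.1
    obtain ⟨r, rfl⟩ := exists_map hn.2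
    rcases h with h | ⟨u, rfl, h⟩
    · exact absurd h hn.1.2
    · exact .inr ⟨l ++ u ++ r, by simp, h.append _ _⟩

theorem Same.symm {v w : List (Option Ltr)} (h : Same v w) : Same w v := by
  rcases h with ⟨h1, h2⟩ | rfl | ⟨u, u', rfl, rfl, h⟩
  · exact .inl ⟨h2, h1⟩
  · exact .inr (.inl rfl)
  · exact same_map h.symm

theorem Same.trans {v w x : List (Option Ltr)} (h : Same v w) (h' : Same w x) : Same v x := by
  rcases h with ⟨h1, h2⟩ | rfl | ⟨u, u', rfl, rfl, h⟩
  · rcases h' with ⟨_, h4⟩ | rfl | ⟨u, u', rfl, rfl, h⟩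
    · exact .inl ⟨h1, h4⟩
    · exact .inl ⟨h1, h2⟩
    · exact .inl ⟨h1, .of_eqv h.symm h2⟩
  · exact h'
  · rcases h' with ⟨h3, h4⟩ | rfl | ⟨u₁, u₂, h₁, rfl, h'⟩
    · exact .inl ⟨.of_eqv h h3, h4⟩
    · exact same_map h
    · cases map_inj h₁
      exact same_map (h.trans h')

theorem Same.append {v w : List (Option Ltr)} (h : Same v w) (l r : List (Option Ltr)) :
    Same (l ++ v ++ r) (l ++ w ++ r) := by
  rcases h with ⟨h1, h2⟩ | rfl | ⟨u, u', rfl, rfl, h⟩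
  · exact .inl ⟨h1.append l r, h2.append l r⟩
  · exact .inr (.inl rfl)
  · by_cases hn : none ∈ l ++ r
    · refine .inl ⟨.inl ?_, .inl ?_⟩ <;> simp at hn ⊢ <;> exact hn
    · simp only [List.mem_append, not_or] at hn
      obtain ⟨l, rfl⟩ := exists_map hn.1
      obtain ⟨r, rfl⟩ := exists_map hn.2
      have := same_map ((Eqv.append (.refl (a := l)) h).append (.refl (a := r)))
      simpa using this

/-- The congruence `Same`, which contains the defining relations by `con_le`. -/
def sameCon : Con (F n) where
  r u v := Same (toL e u) (toL e v)
  iseqv := ⟨fun _ => .inr (.inl rfl), Same.symm, Same.trans⟩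
  mul' {u v u' v'} h h' := by
    rw [toL_mul, toL_mul]
    have h1 := h.append [] (toL e u')
    have h2 := h'.append (toL e v) []
    simp only [List.nil_append, List.append_nil] at h1 h2
    exact h1.trans h2

theorem con_le : con e ≤ sameCon e := by
  refine Con.conGen_le.2 fun u v h => ?_
  change Rel e u v at h
  change Same (toL e u) (toL e v)
  have hd : ∀ l, none ∈ l → Dead l := fun l h => .inl h
  cases h with
  | zl x => exact .inl ⟨hd _ (by simp [toL_mul, toL_gen]), hd _ (by simp [toL_gen])⟩
  | zr x => exact .inl ⟨hd _ (by simp [toL_mul, toL_gen]), hd _ (by simp [toL_gen])⟩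
  | rule h =>
    simp only [toL_mul, toL_gen]
    exact same_map h.eqv₂
  | @zer a b h =>
    simp only [toL_mul, toL_gen]
    exact .inl ⟨.inr ⟨[a, b], rfl, _, .refl, .here _ h⟩, hd _ (by simp)⟩

/-- The element of the free semigroup with the given letters; the empty list gets a junk value. -/
def word : List Ltr → F n
  | [] => gen e none
  | a :: u => ⟨e (some a), u.map fun b => e (some b)⟩

theorem toL_word {u : List Ltr} (h : u ≠ []) : toL e (word e u) = u.map some := by
  cases u with
  | nil => exact absurd rfl h
  | cons a u => simp [word, toL]

theorem infinite_S : Infinite (S e) := by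
  have hne : ∀ k, long k ≠ [] := fun k h => by
    have := long_length k
    rw [h] at this
    exact (Nat.two_pow_pos k).ne this
  refine Infinite.of_injective (fun k : ℕ => ((word e (long k) : F n) : S e)) fun i j h => ?_
  have h : Same _ _ := con_le e ((Con.eq _).1 h)
  rw [toL_word e (hne i), toL_word e (hne j)] at h
  have hl : (long i).length = (long j).length := by
    rcases h with ⟨h, _⟩ | h | ⟨u, u', h1, h2, h⟩
    · rcases h with h | ⟨u, hu, h⟩
      · simp at h
      · cases map_inj hu
        exact absurd h (long_not_nul i)
    · rw [map_inj h]
    · cases map_inj h1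
      cases map_inj h2
      exact h.length
  rw [long_length, long_length] at hl
  exact Nat.pow_right_injective le_rfl hl

end Transfer

end Nilsemi

/-- There exists a finitely presented infinite nilsemigroup: a quotient of a free
semigroup on finitely many generators by the congruence generated by a finite set of
relations which is infinite, has a zero element `z`, and in which every element has
some positive power equal to `z`. -/
theorem exists_finitely_presented_infinite_nilsemigroup :
    ∃ (n : ℕ) (R : Set (FreeSemigroup (Fin n) × FreeSemigroup (Fin n))),
      R.Finite ∧
      Infinite (conGen (fun u v => (u, v) ∈ R)).Quotient ∧
      ∃ z : (conGen (fun u v => (u, v) ∈ R)).Quotient,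
        (∀ x, z * x = z ∧ x * z = z) ∧
        ∀ x, ∃ k : ℕ, iterMul x k = z := by
  open Nilsemi in
  obtain ⟨n, ⟨e⟩⟩ := Finite.exists_equiv_fin (Option Ltr)
  exact ⟨n, rels e, rels_finite e, infinite_S e, cl e none,
    fun s => ⟨zero_mul' e s, mul_zero' e s⟩, nil_S e⟩
end

section
/- There exists a finitely presented infinite semigroup satisfying the identity x⁹ = x¹⁰; that is, there exist a natural number n and a finite set R of pairs of elements of the free semigroup on n generators such that the quotient S of the free semigroup on n generators by the congruence generated by R is infinite and x⁹ = x¹⁰ holds for every element x of S. -/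
namespace SelfSimulation

/-! ### Letters and relations -/

/-- The type of a letter. A letter of type `N` carries a cell not yet reached by the head on its
right, one of type `M` a cell which that head has crossed; a letter of type `S` holds a head or
bookkeeping symbol. -/
inductive Ty | S | N | M
  deriving DecidableEq

instance : Fintype Ty := ⟨{.S, .N, .M}, by rintro ⟨⟩ <;> simp⟩

/-- The status of a head: it either carries a type in the plain way, or is loaded with the request
of a three-letter relation concerning letters of types `z.1`, `z.2`. A loaded head has type `M`. -/
inductive Stat
  | pl (t : Ty)
  | ld (z : Ty × Ty)
  deriving DecidableEq, Fintype

/-- The type carried by a head. -/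
def Stat.base : Stat → Ty
  | pl t => t
  | ld _ => Ty.M

/-- The cell contents: a head `h x`, the remainder `hs` of a head after fusing, a head `a x` which
has crossed a cell, a pair `cp x y` of fused heads, and the trace `p m` of a request of mode `m`
that has been loaded. -/
inductive Cell
  | h (x : Stat)
  | hs
  | a (x : Stat)
  | cp (x y : Stat)
  | p (m : Bool)
  deriving DecidableEq, Fintype

open Ty Stat Cell

/-- The request preceding the two cells on which a three-letter relation acts, `z` being the pair of
types of the letters encoded by them. -/
def req : Bool → Ty × Ty → Cell
  | false, z => cp (pl z.1) (pl z.2)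
  | true, z => cp (ld z) (pl N)

abbrev Letter := Ty × Cell

/-- The two-letter relations `a b = a' b'`. -/
inductive Q : Letter → Letter → Letter → Letter → Prop
  | shift (c x) : Q (N, c) (S, h x) (S, a x) (M, c)
  | plan (x y) : Q (S, h x) (S, a y) (S, hs) (S, cp x y)
  | pick (m z) : Q (S, cp (pl S) (pl M)) (M, req m z) (S, cp (pl S) (ld z)) (M, p m)

/-- The letters `(S, p m)`. -/
inductive IsP : Letter → Prop
  | p (m) : IsP (S, p m)

/-- The pairs of consecutive letters allowed in words equivalent to `σ`-images. -/
inductive OkL : Letter → Letter → Prop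
  | h_N (x c) : OkL (S, h x) (N, c)
  | h_a (x y) : OkL (S, h x) (S, a y)
  | hs_cp (x y) : OkL (S, hs) (S, cp x y)
  | a_M (x c) : OkL (S, a x) (M, c)
  | cp_M (x t c) : OkL (S, cp x (pl t)) (M, c)
  | cp_p (z m) : OkL (S, cp (pl S) (ld z)) (M, p m)
  | M_N (c d) : OkL (M, c) (N, d)
  | M_a (c x) : OkL (M, c) (S, a x)
  | N_h (c x) : OkL (N, c) (S, h x)
  | N_hs (c) : OkL (N, c) (S, hs)

/-- Admissible pairs of consecutive letters. A block reading `(S, p m)` stands for a request that has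
been loaded into the head following it. When it is compared with the block before it, the request
is out of sight, so `(S, p m)` may follow any letter but one of its kind. When it is compared with
the block after it, whose head is then known to be plain, nothing is admitted after it. -/
def Ok (a b : Letter) : Prop := ¬ IsP a ∧ (IsP b ∨ OkL a b)

/-- A monoid with elements `G l` indexed by the letters and a zero `O`, satisfying the defining
relations. -/
structure Model (K : Type*) [Monoid K] where
  G : Letter → K
  O : K
  O_mul : ∀ x, O * x = O
  mul_O : ∀ x, x * O = O
  two : ∀ {a b a' b'}, Q a b a' b' → G a * G b = G a' * G b'
  three : ∀ {z w : Ty × Ty} {c c' d d'}, Q (z.1, c) (z.2, c') (w.1, d) (w.2, d') → ∀ m,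
    G (S, req m z) * (G (M, c) * G (N, c')) = G (S, req m w) * (G (M, d) * G (N, d'))
  bad2 : ∀ {a b}, ¬ Ok a b → G a * G b = O
  bad3 : ∀ {z : Ty × Ty} {c c'}, ¬ Ok (z.1, c) (z.2, c') → ∀ m,
    G (S, req m z) * (G (M, c) * G (N, c')) = O

/-! ### The substitution respects the relations -/

namespace Model
variable {K : Type*} [Monoid K] (A : Model K)

/-- The generator for a head of status `x`. -/
def H (x : Stat) : K := A.G (S, h x)
/-- The generator for a cell not yet reached by a head. -/
def n (c : Cell) : K := A.G (N, c)

theorem tail2 {K : Type*} [Monoid K] {a b c : K} (h : a * b = c) (t : K) : a * (b * t) = c * t := by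
  rw [← mul_assoc, h]

/-- Two heads meet over the cell between them. -/
theorem couple (x y : Stat) (c : Cell) :
    A.H x * (A.n c * A.H y) = A.G (S, hs) * (A.G (S, cp x y) * A.G (M, c)) := by
  rw [n, H, H, A.two (.shift c y), tail2 (A.two (.plan x y)), mul_assoc]

theorem couple' (x y : Stat) (c : Cell) (t : K) :
    A.H x * (A.n c * (A.H y * t)) = A.G (S, hs) * (A.G (S, cp x y) * (A.G (M, c) * t)) := by
  have := congrArg (· * t) (A.couple x y c)
  simpa only [mul_assoc] using this

/-- The request in a cell can be loaded into the head on its right. -/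
theorem unload (m : Bool) (z : Ty × Ty) :
    A.H (pl S) * (A.n (req m z) * A.H (pl M)) = A.H (pl S) * (A.n (p m) * A.H (ld z)) := by
  rw [couple, couple, A.two (.pick m z)]

theorem unload' (m : Bool) (z : Ty × Ty) (t : K) :
    A.H (pl S) * (A.n (req m z) * (A.H (pl M) * t)) =
      A.H (pl S) * (A.n (p m) * (A.H (ld z) * t)) := by
  have := congrArg (· * t) (A.unload m z)
  simpa only [mul_assoc] using this

theorem kill {x y : Stat} {c : Cell} (hb : ¬ Ok (S, cp x y) (M, c)) (t : K) :
    A.H x * (A.n c * (A.H y * t)) = A.O := by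
  rw [couple', tail2 (A.bad2 hb), A.O_mul, A.mul_O]

/-- The image of a letter under the substitution `σ`. -/
def sg (l : Letter) : K := A.H (pl l.1) * A.n l.2

theorem sg_two {a b a' b'} (q : Q a b a' b') : A.sg a * A.sg b = A.sg a' * A.sg b' := by
  have := A.three (z := (a.1, b.1)) (w := (a'.1, b'.1)) q false
  simp only [sg, mul_assoc, couple']
  simp only [req] at this
  rw [n, n, this]

theorem sg_bad2 {a b} (q : ¬ Ok a b) : A.sg a * A.sg b = A.O := by
  have := A.bad3 (z := (a.1, b.1)) q false
  simp only [sg, mul_assoc, couple']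
  simp only [req] at this
  rw [n, this, A.mul_O]

theorem sg_triple (m : Bool) (z : Ty × Ty) (c c' : Cell) :
    A.sg (S, req m z) * (A.sg (M, c) * A.sg (N, c')) =
      A.H (pl S) * (A.n (p m) * (A.G (S, hs) * (A.G (S, req true z) *
        (A.G (M, c) * A.G (N, c'))))) := by
  simp only [sg, mul_assoc]
  rw [unload', A.couple' (ld z) (pl N)]; rfl

theorem sg_three {z w : Ty × Ty} {c c' d d'} (q : Q (z.1, c) (z.2, c') (w.1, d) (w.2, d')) (m) :
    A.sg (S, req m z) * (A.sg (M, c) * A.sg (N, c')) =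
      A.sg (S, req m w) * (A.sg (M, d) * A.sg (N, d')) := by
  rw [sg_triple, sg_triple, A.three q]

theorem sg_bad3 {z : Ty × Ty} {c c'} (q : ¬ Ok (z.1, c) (z.2, c')) (m) :
    A.sg (S, req m z) * (A.sg (M, c) * A.sg (N, c')) = A.O := by
  rw [sg_triple, A.bad3 q, A.mul_O, A.mul_O, A.mul_O]

/-! ### Block words and their decoding -/

/-- `V f i k = G (f i) * G (f (i + 1)) * ⋯ * G (f (i + k - 1))`. -/
def V (f : ℤ → Letter) : ℤ → ℕ → K
  | _, 0 => 1
  | i, k + 1 => A.G (f i) * V f (i + 1) k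

theorem V_add (f : ℤ → Letter) (i : ℤ) (k l : ℕ) :
    A.V f i (k + l) = A.V f i k * A.V f (i + k) l := by
  induction k generalizing i with
  | zero => simp [V]
  | succ k ih =>
    rw [Nat.succ_add_eq_add_succ, Nat.add_succ, V, V, ih, mul_assoc]
    push_cast; ring_nf

theorem V_zero_of_sub (f : ℤ → Letter) (i : ℤ) (k l j : ℕ) (h0 : A.V f (i + j) k = A.O)
    (hl : j + k ≤ l) : A.V f i l = A.O := by
  obtain ⟨r, rfl⟩ := Nat.exists_eq_add_of_le hl
  rw [V_add, V_add, h0, A.mul_O, A.O_mul]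

/-- The block word `H s * n (c j) * H (x (j + 1)) * n (c (j + 1)) * ⋯ * H (x (j + k))`, whose first
head has status `s` instead of `x j`. -/
def U (x : ℤ → Stat) (c : ℤ → Cell) (s : Stat) : ℤ → ℕ → K
  | _, 0 => A.H s
  | j, k + 1 => A.H s * (A.n (c j) * U x c (x (j + 1)) (j + 1) k)

/-- A block word depends on the status of its first head only through that head. -/
theorem U_head (x : ℤ → Stat) (c : ℤ → Cell) (j : ℤ) (k : ℕ) :
    ∃ t, ∀ s, A.U x c s j k = A.H s * t := by
  cases k with
  | zero => exact ⟨1, fun s => by simp [U]⟩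
  | succ k => exact ⟨_, fun s => by rw [U]⟩

/-- The letter encoded by a head of type `θ`, a cell `c` and the following head, of the given
status. The request is recovered if it has been loaded into the following head. -/
def wdec (θ : Ty) (c : Cell) : Stat → Letter
  | pl _ => (θ, c)
  | ld z => match c with
    | p m => (θ, req m z)
    | _ => (θ, c)

/-- A plain head and a cell, followed by a head, form a `σ`-image once the request held by the second
head, if any, has been put back into the cell, or else the product is zero. -/
theorem triple (θ : Ty) (c : Cell) (x : Stat) (t : K) :
    A.H (pl θ) * (A.n c * (A.H x * t)) = A.O ∨
    A.H (pl θ) * (A.n c * (A.H x * t)) = A.sg (wdec θ c x) * (A.H (pl x.base) * t) := by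
  cases x with
  | pl t => right; simp [wdec, sg, base, mul_assoc]
  | ld z =>
    by_cases hb : Ok (S, cp (pl θ) (ld z)) (M, c)
    · obtain ⟨-, h | h⟩ := hb
      · cases h
      · cases h
        right
        rw [← unload']; simp [wdec, sg, base, mul_assoc]
    · exact .inl (A.kill hb t)

/-- Two consecutive heads cannot both be loaded. -/
theorem kill_ld (y z : Ty × Ty) (c : Cell) (t : K) :
    A.H (ld y) * (A.n c * (A.H (ld z) * t)) = A.O := by
  apply kill
  rintro ⟨-, h | h⟩ <;> cases h

/-- The word encoded by a block word. -/
def W (x : ℤ → Stat) (c : ℤ → Cell) (j : ℤ) : Letter := wdec (x j).base (c j) (x (j + 1))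

variable {A} in
/-- A block word starting with a plain head is zero, or a `σ`-image followed by a plain head. -/
theorem U_eq {Sg : K →* K} (hSg : ∀ l, Sg (A.G l) = A.sg l)
    (x : ℤ → Stat) (c : ℤ → Cell) (j : ℤ) (k : ℕ) :
    A.U x c (pl (x j).base) j k = A.O ∨
    A.U x c (pl (x j).base) j k = Sg (A.V (W x c) j k) * A.H (pl (x (j + k)).base) := by
  induction k generalizing j with
  | zero => right; simp [U, V]
  | succ k ih =>
    obtain ⟨t, ht⟩ := A.U_head x c (j + 1) k
    rw [U, ht]
    rcases A.triple (x j).base (c j) (x (j + 1)) t with h | h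
    · exact .inl h
    · rw [h, ← ht]
      rcases ih (j + 1) with h | h
      · left; rw [h, A.mul_O]
      · right
        rw [h, V, map_mul, hSg, mul_assoc]
        push_cast
        rw [show j + 1 + (k : ℤ) = j + (k + 1) by ring]; rfl


/-! ### Admissible infinite words are block words -/

/-- Whether a letter is the first of its block of two. -/
def par : Letter → Bool
  | (S, h _) => true
  | (S, hs) => true
  | (M, _) => true
  | _ => false

theorem par_ok {a b} (q : OkL a b) : Model.par b = !Model.par a := by
  cases q <;> rfl

/-- The status of the head of a block starting with the letter `a`, where `l` and `b` are the letters
before and after `a`. Once the head has moved or fused, it is read off from `l` or `b`. The values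
for inadmissible triples are irrelevant. -/
def xs (l a b : Letter) : Stat :=
  match a with
  | (S, h x) => x
  | (S, hs) => match b with
    | (_, cp x _) => x
    | _ => pl S
  | _ => match l with
    | (_, Cell.a y) => y
    | (_, cp _ y) => y
    | _ => pl S

/-- The cell of a block whose letter after the head is `b`, where `c` follows `b`. -/
def cs (b c : Letter) : Cell := if b.1 = N then b.2 else c.2

/-- The head of a block of status `x`, in the form fitting the following letter `b`: the remainder
`(S, hs)` if it has been fused into `b`, the head itself otherwise. -/
def hd (x : Stat) (b : Letter) : Letter := match b with
  | (S, cp _ _) => (S, hs)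
  | _ => (S, h x)

/-- One block of an admissible word can be put into standard form, moving the head of the next block
back to its place. -/
theorem block_step {l a b c d : Letter} (h1 : OkL a b) (h2 : OkL b c) (h3 : OkL c d)
    (ha : par a = true) :
    A.G (hd (xs l a b) b) * (A.G b * A.G c) =
      A.H (xs l a b) * (A.n (cs b c) * A.G (hd (xs b c d) d)) := by
  have sh := fun c x => A.two (.shift c x)
  have pn := fun x y t => tail2 (A.two (.plan x y)) t
  cases h1 <;> try (simp [par] at ha; done)
  all_goals cases h2 <;> cases h3 <;> simp [hd, xs, cs, H, n, sh, pn, mul_assoc]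

/-- A block at the end of a stretch starts with its head. -/
theorem block_last {l a b : Letter} (h1 : OkL a b) (ha : par a = true) :
    ∃ s, A.G (hd (xs l a b) b) * A.G b = A.H (xs l a b) * s := by
  have pn := fun x y => A.two (.plan x y)
  cases h1 <;> try (simp [par] at ha; done)
  all_goals simp only [hd, xs, H, ← pn]; exact ⟨_, rfl⟩

/-- The head of a block can be restored with the help of the two letters preceding it. -/
theorem block_first {l' l a b : Letter} (h1 : OkL l' l) (h2 : OkL l a) (h3 : OkL a b)
    (ha : par a = true) :
    ∃ p, A.G l' * (A.G l * A.G a) = p * A.G (hd (xs l a b) b) := by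
  have sh := fun c x => A.two (.shift c x)
  cases h3 <;> try (simp [par] at ha; done)
  all_goals cases h2 <;> cases h1 <;> simp only [hd, xs, ← sh] <;>
    first
      | exact ⟨_, (mul_assoc _ _ _).symm⟩
      | exact ⟨_, (A.couple _ _ _).symm.trans (mul_assoc _ _ _).symm⟩

theorem par_add {f : ℤ → Letter} (hf : ∀ i, OkL (f i) (f (i + 1))) (i j : ℤ) :
    par (f (i + j)) = (par (f i) == decide (j % 2 = 0)) := by
  have e : ∀ j : ℤ, decide ((j + 1) % 2 = 0) = !decide (j % 2 = 0) := fun j => by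
    rw [Bool.eq_iff_iff]; simp; omega
  induction j using Int.induction_on with
  | zero => simp
  | succ k ih =>
    rw [← add_assoc, par_ok (hf _), ih, e]; cases par (f i) <;> simp
  | pred k ih =>
    have h1 := par_ok (hf (i + (-k - 1)))
    have h2 := e (-k - 1)
    rw [sub_add_cancel] at h2
    rw [show i + (-(k : ℤ) - 1) + 1 = i + -k by ring, ih, h2] at h1
    generalize decide ((-(k : ℤ) - 1) % 2 = 0) = q at h1 ⊢
    generalize par (f (i + (-k - 1))) = q' at h1 ⊢
    revert h1
    cases par (f i) <;> cases q <;> cases q' <;> simp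

/-- The status of the head of the `j`-th block, blocks being counted from position `i`. -/
def X (f : ℤ → Letter) (i j : ℤ) : Stat :=
  xs (f (i + 2 * j - 1)) (f (i + 2 * j)) (f (i + 2 * j + 1))

/-- The cell of the `j`-th block, blocks being counted from position `i`. -/
def C (f : ℤ → Letter) (i j : ℤ) : Cell := cs (f (i + 2 * j + 1)) (f (i + 2 * j + 2))

/-- From a restored head on, an admissible word is a block word up to a right factor. -/
theorem run {f : ℤ → Letter} (hf : ∀ i, OkL (f i) (f (i + 1))) {i : ℤ} (hi : par (f i) = true)
    (k : ℕ) (j : ℤ) :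
    ∃ s, A.G (hd (X f i j) (f (i + 2 * j + 1))) * A.V f (i + 2 * j + 1) (2 * k + 1) =
      A.U (X f i) (C f i) (X f i j) j k * s := by
  have hp : par (f (i + 2 * j)) = true := by rw [par_add hf, hi]; simp
  induction k generalizing j with
  | zero =>
    obtain ⟨s, hs⟩ := A.block_last (l := f (i + 2 * j - 1)) (hf (i + 2 * j)) hp
    exact ⟨s, by simpa [V, U, X] using hs⟩
  | succ k ih =>
    have e : i + 2 * (j + 1) = i + 2 * j + 1 + 1 := by ring
    obtain ⟨s, hs⟩ := ih (j + 1) (by rw [par_add hf, hi]; simp)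
    refine ⟨s, ?_⟩
    rw [show 2 * (k + 1) + 1 = 2 * k + 1 + 1 + 1 by ring]
    have := A.block_step (l := f (i + 2 * j - 1)) (hf (i + 2 * j)) (hf _) (hf _) hp
    have e1 : X f i (j + 1) = xs (f (i + 2 * j + 1)) (f (i + 2 * j + 1 + 1))
      (f (i + 2 * j + 1 + 1 + 1)) := by rw [X, e]; simp
    have e2 : C f i j = cs (f (i + 2 * j + 1)) (f (i + 2 * j + 1 + 1)) := by
      rw [C, show i + 2 * j + 2 = i + 2 * j + 1 + 1 by ring]
    rw [U, mul_assoc, mul_assoc, ← hs, e2, e1, e, ← mul_assoc (A.n _), ← mul_assoc (A.H _), X,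
      ← this]
    simp only [V, mul_assoc]

/-- A stretch of an admissible word, up to left and right factors, is a block word whose first head is
the one of the block starting at `i`. The left factor comes from the two letters before `i`, which
are needed to restore that head. -/
theorem window {f : ℤ → Letter} (hf : ∀ i, OkL (f i) (f (i + 1))) {i : ℤ} (hi : par (f i) = true)
    (k : ℕ) :
    ∃ p s, A.V f (i - 2) (2 * k + 4) = p * (A.U (X f i) (C f i) (X f i 0) 0 k * s) := by
  obtain ⟨s, hs⟩ := A.run hf hi k 0
  have h1 := hf (i - 2)
  have h2 := hf (i - 2 + 1)
  rw [show i - 2 + 1 + 1 = i by ring] at h2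
  obtain ⟨p, hp⟩ := A.block_first h1 h2 (hf i) hi
  refine ⟨p, s, ?_⟩
  rw [← hs]
  simp only [X, mul_zero, add_zero]
  rw [show i - 1 = i - 2 + 1 by ring, ← mul_assoc, ← hp]
  simp only [V, mul_assoc, show i - 2 + 1 + 1 = i by ring]

/-- Any stretch of `9 * m - 7` letters of a word of period `m` is zero, in a model with an
endomorphism realizing the substitution. -/
theorem nil {Sg : K →* K} (hSg : ∀ l, Sg (A.G l) = A.sg l) (hO : Sg A.O = A.O) (m : ℕ)
    (hm : 0 < m) (f : ℤ → Letter) (hf : ∀ i, f (i + m) = f i) (b : ℤ) :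
    A.V f b (9 * m - 7) = A.O := by
  induction m using Nat.strong_induction_on generalizing f b with
  | _ m ih =>
  by_cases hok : ∀ i, Ok (f i) (f (i + 1))
  · have hokl : ∀ i, OkL (f i) (f (i + 1)) := fun i =>
      (hok i).2.resolve_left (hok (i + 1)).1
    have hev : (m : ℤ) % 2 = 0 := by
      have := par_add hokl 0 m
      rw [hf] at this
      by_contra hm
      rw [decide_eq_false hm] at this
      revert this
      cases par (f 0) <;> simp
    -- `d` aligns the start of the stretch with the blocks
    obtain ⟨r, rfl⟩ : ∃ r, m = 2 * r := ⟨m / 2, by omega⟩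
    obtain ⟨d, hd, hi⟩ : ∃ d : ℕ, d ≤ 1 ∧ par (f (b + d + 2)) = true := by
      cases h : par (f (b + 2))
      · refine ⟨1, le_rfl, ?_⟩
        rw [show b + (1 : ℕ) + 2 = b + 2 + 1 by push_cast; ring, par_ok (hokl _), h]; rfl
      · exact ⟨0, by simp, by simpa using h⟩
    obtain ⟨p, s, hw⟩ := A.window hokl hi (9 * r - 6)
    rw [show b + d + 2 - 2 = b + d by ring] at hw
    apply A.V_zero_of_sub f b _ _ d (hw.trans ?_) (by omega)
    generalize b + d + 2 = i
    have hf2 : ∀ j, f (j + 2 * r) = f j := by intro j; have := hf j; push_cast at this; exact this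
    have hX : ∀ j, X f i (j + r) = X f i j := by
      intro j
      rw [X, X, ← hf2 (i + 2 * j - 1), ← hf2 (i + 2 * j), ← hf2 (i + 2 * j + 1)]
      ring_nf
    have hC : ∀ j, C f i (j + r) = C f i j := by
      intro j
      rw [C, C, ← hf2 (i + 2 * j + 2), ← hf2 (i + 2 * j + 1)]
      ring_nf
    generalize X f i = x at hX ⊢
    generalize C f i = c at hC ⊢
    have hW : ∀ j, W x c (j + r) = W x c j := by
      intro j
      rw [W, W, hX, hC, add_right_comm, hX]
    have key : ∀ j k, 9 * r - 7 ≤ k → A.U x c (pl (x j).base) j k = A.O := by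
      intro j k hk
      rcases U_eq hSg x c j k with h | h
      · exact h
      · rw [h, A.V_zero_of_sub (W x c) j (9 * r - 7) k 0 (ih r (by omega) (by omega) _ hW _)
          (by omega), hO, A.O_mul]
    -- if the first head is loaded, the next one is plain or the word is zero
    suffices h : A.U x c (x 0) 0 (9 * r - 6) = A.O by rw [h, A.O_mul, A.mul_O]
    cases hx : x 0 with
    | pl t =>
      have := key 0 (9 * r - 6) (by omega)
      rwa [hx] at this
    | ld y =>
      rw [show 9 * r - 6 = 9 * r - 7 + 1 by omega, U]
      have := key (0 + 1) (9 * r - 7) le_rfl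
      cases hx1 : x (0 + 1) with
      | pl t =>
        rw [hx1] at this
        rw [show A.U x c (pl t) (0 + 1) (9 * r - 7) = A.O from this, A.mul_O, A.mul_O]
      | ld z =>
        obtain ⟨t, ht⟩ := A.U_head x c (0 + 1) (9 * r - 7)
        rw [ht, A.kill_ld]
  · push Not at hok
    obtain ⟨i, hi⟩ := hok
    -- by periodicity the forbidden pair occurs within the first `m + 1` letters of the stretch
    have hper : Function.Periodic f (m : ℤ) := hf
    have hq : f (b + (i - b) % m) = f i ∧ f (b + (i - b) % m + 1) = f (i + 1) := by
      have e := Int.emod_add_mul_ediv (i - b) m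
      have h1 := hper.sub_int_mul_eq ((i - b) / m) (x := i)
      have h2 := hper.sub_int_mul_eq ((i - b) / m) (x := i + 1)
      rw [← h1, ← h2]
      rw [Int.cast_id]
      constructor <;> congr 1 <;> linarith
    have h0 := Int.emod_nonneg (i - b) (b := m) (by omega)
    have h1 := Int.emod_lt_of_pos (i - b) (b := m) (by omega)
    refine A.V_zero_of_sub f b 2 _ ((i - b) % m).toNat ?_ (by omega)
    rw [Int.toNat_of_nonneg h0]
    simp only [V, hq, mul_one]
    exact A.bad2 hi

end Model
/-! ### Alive words -/

/-- The length preserving defining relations, as rewriting rules. -/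
inductive Step0 : List Letter → List Letter → Prop
  | two {a b a' b'} (q : Q a b a' b') : Step0 [a, b] [a', b']
  | three {z w : Ty × Ty} {c c' d d'} (q : Q (z.1, c) (z.2, c') (w.1, d) (w.2, d')) (m) :
    Step0 [(S, req m z), (M, c), (N, c')] [(S, req m w), (M, d), (N, d')]

/-- The words equated with zero by the defining relations. -/
inductive Bad0 : List Letter → Prop
  | two {a b} (q : ¬ Ok a b) : Bad0 [a, b]
  | three {z : Ty × Ty} {c c'} (q : ¬ Ok (z.1, c) (z.2, c')) (m) :
    Bad0 [(S, req m z), (M, c), (N, c')]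

/-- Applying a length preserving relation, in either direction, inside a word. -/
def Step (w w' : List Letter) : Prop :=
  ∃ p l r s, (Step0 l r ∨ Step0 r l) ∧ w = p ++ (l ++ s) ∧ w' = p ++ (r ++ s)

/-- Containing a factor which is equated with zero. -/
def HasBad (w : List Letter) : Prop := ∃ p l s, Bad0 l ∧ w = p ++ (l ++ s)

/-- No equivalent word has a factor equated with zero. -/
def Alive (w : List Letter) : Prop := ∀ w', Relation.ReflTransGen Step w w' → ¬ HasBad w'

theorem Step.symm {w w'} : Step w w' → Step w' w := fun ⟨u, l, r, s, e, h1, h2⟩ =>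
  ⟨u, r, l, s, e.symm, h2, h1⟩

theorem Step.alive {w w'} (h : Step w w') : Alive w ↔ Alive w' :=
  ⟨fun ha v hv => ha v (.head h hv), fun ha v hv => ha v (.head h.symm hv)⟩

theorem Step.append {w w'} (h : Step w w') (o : List Letter) : Step (o ++ w) (o ++ w') := by
  obtain ⟨p, l, r, s, h, rfl, rfl⟩ := h
  exact ⟨o ++ p, l, r, s, h, by simp, by simp⟩

theorem HasBad.append {w} (h : HasBad w) (o : List Letter) : HasBad (o ++ w) := by
  obtain ⟨p, l, s, h, rfl⟩ := h
  exact ⟨o ++ p, l, s, h, by simp⟩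

theorem alive_singleton (a : Letter) : Alive [a] := by
  have hb : ¬ HasBad [a] := by
    rintro ⟨p, l, s, h, e⟩
    have := congrArg List.length e
    cases h <;> simp at this <;> omega
  intro w h
  cases h.cases_head with
  | inl h => rwa [← h]
  | inr h =>
    obtain ⟨v, ⟨p, l, r, s, h, e, -⟩, -⟩ := h
    have := congrArg List.length e
    rcases h with h | h <;> cases h <;> simp at this <;> omega

/-! ### Decoding by a transducer -/

/-- The states of the transducer. `E q`: a block begins; `X t`: a head of type `t` has been read;
`H q`: the letter `(S, hs)` has been read; `A t y`: a head of type `t` has been read, the next head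
has status `y`, and the cell between them comes next. In `E q` and `H q`, `q` is the pending letter
encoded by the previous block, output once the status of the next head is known. -/
inductive St
  | E (q : Option Letter)
  | X (t : Ty)
  | H (q : Option Letter)
  | A (t : Ty) (y : Stat)

open St

/-- The output of a pending letter once the following head is known. If that head is loaded, the letter
must be the trace of the request, and is restored to it. -/
inductive Res : Option Letter → Stat → List Letter → Prop
  | pl (q t) : Res q (pl t) q.toList
  | ld (m z) : Res (some (S, p m)) (ld z) [(S, req m z)]

/-- `Tr st a o st'`: in state `st`, reading the letter `a`, the transducer outputs `o` and passes to
`st'`. -/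
inductive Tr : St → Letter → List Letter → St → Prop
  | E_h {q x o} : Res q x o → Tr (E q) (S, h x) o (X x.base)
  | E_hs (q) : Tr (E q) (S, hs) [] (H q)
  | X_N (t c) : Tr (X t) (N, c) [] (E (some (t, c)))
  | X_a (t y) : Tr (X t) (S, a y) [] (A t y)
  | H_cp {q x o} (y) : Res q x o → Tr (H q) (S, cp x y) o (A x.base y)
  | A_M {t c y o} : Res (some (t, c)) y o → Tr (A t y) (M, c) o (X y.base)

/-- `Dec st w W`: reading `w` from state `st`, the transducer outputs `W`. The last block must be
complete. -/
inductive Dec : St → List Letter → List Letter → Prop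
  | nil (q : Option Letter) : Dec (E q) [] q.toList
  | cons {st st' a o w W} : Tr st a o st' → Dec st' w W → Dec st (a :: w) (o ++ W)

/-- The substitution `σ` on words. -/
def sub (w : List Letter) : List Letter := w.flatMap fun l => [(S, h (pl l.1)), (N, l.2)]

theorem dec_sub (q : Option Letter) (w : List Letter) : Dec (E q) (sub w) (q.toList ++ w) := by
  induction w generalizing q with
  | nil => rw [List.append_nil]; exact .nil q
  | cons l w ih => exact .cons (.E_h (.pl q l.1)) (.cons (.X_N _ _) (ih _))

theorem Res.of_pl {q t o} (h : Res q (Stat.pl t) o) : o = q.toList := by cases h; rfl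

theorem IsP.fst {t c} (h : IsP (t, c)) : t = S := by cases h; rfl

/-- The two-letter relations do not change the decoded word. -/
theorem Dec.two {a b a' b'} (q : Q a b a' b' ∨ Q a' b' a b) {st : St} {w W : List Letter}
    (hd : Dec st (a :: b :: w) W) : Dec st (a' :: b' :: w) W := by
  obtain q | q := q <;> cases q <;> obtain _ | ⟨h1, _ | ⟨h2, h3⟩⟩ := hd <;> cases h1
  · cases h2 with | E_h h2 => exact .cons (.X_a _ _) (.cons (.A_M h2) h3)
  · cases h2; rename_i h; simpa using Dec.cons (.E_hs _) (.cons (.H_cp _ h) h3)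
  · rename_i h; cases h2 with | A_M h2 =>
      obtain rfl := h2.of_pl; exact .cons (.H_cp _ h) (.cons (.A_M (.ld _ _)) h3)
  · cases h2 with | A_M h2 => exact .cons (.X_N _ _) (.cons (.E_h h2) h3)
  · cases h2; rename_i h; simpa using Dec.cons (.E_h h) (.cons (.X_a _ _) h3)
  · rename_i h; cases h2 with | A_M h2 =>
      cases h2; exact .cons (.H_cp _ h) (.cons (.A_M (.pl _ _)) h3)

/-- Decoding a concatenation; the second part can be exchanged for any word with a decoding from the
same state. -/
theorem Dec.append {st : St} {u v W : List Letter} (hd : Dec st (u ++ v) W) :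
    ∃ o st' W', Dec st' v W' ∧ W = o ++ W' ∧
      ∀ v' W'', Dec st' v' W'' → Dec st (u ++ v') (o ++ W'') := by
  induction u generalizing st W with
  | nil => exact ⟨[], st, W, hd, rfl, fun _ _ h => h⟩
  | cons a u ih =>
    obtain _ | ⟨h1, h2⟩ := hd
    obtain ⟨o, st', W', h3, rfl, h4⟩ := ih h2
    exact ⟨_, st', W', h3, (List.append_assoc _ _ _).symm, fun v' W'' h => by
      rw [List.append_assoc]; exact .cons h1 (h4 v' W'' h)⟩

/-- A decodable word does not begin with a forbidden pair. -/
theorem Dec.ok {st : St} {a b : Letter} {v W : List Letter} (hd : Dec st (a :: b :: v) W) :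
    Ok a b := by
  obtain _ | ⟨h1, _ | ⟨h2, -⟩⟩ := hd
  refine ⟨(by rintro ⟨⟩; cases h1), .inr ?_⟩
  cases h1 with
  | E_h => cases h2 <;> constructor
  | E_hs => cases h2; constructor
  | X_N => cases h2 <;> constructor
  | X_a => cases h2; constructor
  | A_M => cases h2 <;> constructor
  | @H_cp _ x _ _ _ =>
    generalize hx : x.base = t at h2
    cases h2 with | A_M h2 =>
    cases h2 with
    | pl => constructor
    | ld => cases x <;> cases hx; constructor

/-- A pending letter other than `(S, p m)` is output unchanged, as the head that follows is plain.
It may be exchanged for another such letter. -/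
theorem Dec.pending {l : Letter} (hl : ¬ IsP l) {v W : List Letter} (hd : Dec (E (some l)) v W) :
    ∃ W0, W = l :: W0 ∧ ∀ l', ¬ IsP l' → Dec (E (some l')) v (l' :: W0) := by
  cases hd with
  | nil => exact ⟨[], rfl, fun l' _ => .nil _⟩
  | cons h1 h2 =>
    cases h1 with
    | E_h h3 =>
      cases h3 with
      | pl => exact ⟨_, rfl, fun l' _ => .cons (.E_h (.pl _ _)) h2⟩
      | ld => exact absurd (.p _) hl
    | E_hs =>
      obtain _ | ⟨h1, h2⟩ := h2
      cases h1 with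
      | H_cp _ h3 =>
        cases h3 with
        | pl => exact ⟨_, rfl, fun l' _ => .cons (.E_hs _) (.cons (.H_cp _ (.pl _ _)) h2)⟩
        | ld => exact absurd (.p _) hl

theorem Dec.pending_ne {l : Letter} {v W : List Letter} (hd : Dec (E (some l)) v W) :
    ∃ x W', W = x :: W' := by
  cases hd with
  | nil => exact ⟨_, _, rfl⟩
  | cons h1 h2 =>
    cases h1 with
    | E_h h3 => cases h3 <;> exact ⟨_, _, rfl⟩
    | E_hs =>
      obtain _ | ⟨h1, h2⟩ := h2
      cases h1 with
      | H_cp _ h3 => cases h3 <;> exact ⟨_, _, rfl⟩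

/-- The three letters involved in a three-letter relation decode either to the two letters they encode,
the second of which is pending, or, if the request has been loaded from the previous block,
to three letters of the same kind. -/
theorem Dec.three {st : St} {m : Bool} {z : Ty × Ty} {c c' : Cell} {v W : List Letter}
    (hd : Dec st ([(S, req m z), (M, c), (N, c')] ++ v) W) :
    (∃ P W0, W = P ++ (z.1, c) :: W0 ∧ Dec (E (some (z.2, c'))) v W0 ∧
      ∀ (w : Ty × Ty) d d' W0', Dec (E (some (w.2, d'))) v W0' →
        Dec st ([(S, req m w), (M, d), (N, d')] ++ v) (P ++ (w.1, d) :: W0')) ∨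
    ∃ m' W0, W = [(S, req m' z), (M, c), (N, c')] ++ W0 ∧
      ∀ (w : Ty × Ty) d d', ¬ IsP (w.2, d') →
        Dec st ([(S, req m w), (M, d), (N, d')] ++ v)
          ([(S, req m' w), (M, d), (N, d')] ++ W0) := by
  obtain _ | ⟨h1, _ | ⟨h2, _ | ⟨h3, h4⟩⟩⟩ := hd
  cases m
  · left
    cases h1 with | H_cp _ h1 =>
    cases h1 with | pl =>
    cases h2 with | A_M h2 =>
    obtain rfl := h2.of_pl
    cases h3
    exact ⟨_, _, rfl, h4, fun w d d' W0' h => .cons (.H_cp _ (.pl _ _)) (.cons (.A_M (.pl _ _))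
      (.cons (.X_N _ _) h))⟩
  · right
    cases h1 with | H_cp _ h1 =>
    cases h1 with | ld m' =>
    cases h2 with | A_M h2 =>
    obtain rfl := h2.of_pl
    cases h3
    obtain ⟨W0, rfl, h⟩ := Dec.pending (l := (N, c')) (fun h => nomatch h.fst) h4
    exact ⟨m', W0, rfl, fun w d d' _ => .cons (o := [_]) (.H_cp _ (.ld _ _)) (.cons (o := [_])
      (.A_M (.pl (some (M, d)) _)) (.cons (o := []) (.X_N _ _)
        (h (N, d') fun h => nomatch h.fst)))⟩

theorem Q.not_isP {a b a' b'} (q : Q a b a' b' ∨ Q a' b' a b) : ¬ IsP b := by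
  rintro ⟨m⟩; obtain q | q := q <;> cases q

/-- A relation applied to a word acts on the decoded word by at most one relation. -/
theorem Dec.step {w w' W : List Letter} {q : Option Letter} (hd : Dec (E q) w W) (hs : Step w w') :
    ∃ W', Dec (E q) w' W' ∧ (W = W' ∨ Step W W') := by
  obtain ⟨p, l, r, s, h, rfl, rfl⟩ := hs
  obtain ⟨o, st, W, hd', rfl, hp⟩ := hd.append
  clear hd
  suffices ∃ W', Dec st (r ++ s) W' ∧ (W = W' ∨ Step W W') by
    obtain ⟨W', h1, h2⟩ := this
    exact ⟨_, hp _ _ h1, h2.imp (congrArg _) (·.append o)⟩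
  have key : ∀ {z w : Ty × Ty} {c c' d d' m},
      (Q (z.1, c) (z.2, c') (w.1, d) (w.2, d') ∨ Q (w.1, d) (w.2, d') (z.1, c) (z.2, c')) →
      Dec st ([(S, req m z), (M, c), (N, c')] ++ s) W →
      ∃ W', Dec st ([(S, req m w), (M, d), (N, d')] ++ s) W' ∧ (W = W' ∨ Step W W') := by
    intro z w c c' d d' m q hd
    obtain ⟨P, W0, rfl, h1, h2⟩ | ⟨m', W0, rfl, h2⟩ := hd.three
    · obtain ⟨W1, rfl, h3⟩ := h1.pending (Q.not_isP q)
      exact ⟨_, h2 w d d' _ (h3 _ (Q.not_isP q.symm)), .inr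
        ⟨P, [_, _], [_, _], W1, q.imp .two .two, rfl, rfl⟩⟩
    · exact ⟨_, h2 w d d' (Q.not_isP q.symm), .inr
        ⟨[], _, _, W0, q.imp (.three · m') (.three · m'), rfl, rfl⟩⟩
  obtain h | h := h
  · cases h with
    | two q => exact ⟨W, hd'.two (.inl q), .inl rfl⟩
    | three q => exact key (.inl q) hd'
  · cases h with
    | two q => exact ⟨W, hd'.two (.inr q), .inl rfl⟩
    | three q => exact key (.inr q) hd'

/-- A factor equated with zero is decoded to such a factor. -/
theorem Dec.hasBad {w W : List Letter} {q : Option Letter} (hd : Dec (E q) w W) (hs : HasBad w) :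
    HasBad W := by
  obtain ⟨p, l, s, h, rfl⟩ := hs
  obtain ⟨o, st, W, hd', rfl, -⟩ := hd.append
  apply HasBad.append
  cases h with
  | two h => exact absurd hd'.ok h
  | @three z c c' h =>
    obtain ⟨P, W0, rfl, h1, -⟩ | ⟨m', W0, rfl, -⟩ := hd'.three
    · by_cases hz : IsP (z.2, c')
      · obtain ⟨x, W1, rfl⟩ := h1.pending_ne
        exact ⟨P, [_, _], W1, .two fun h' => h ⟨h'.1, .inl hz⟩, rfl⟩
      · obtain ⟨W1, rfl, -⟩ := h1.pending hz
        exact ⟨P, [_, _], W1, .two h, rfl⟩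
    · exact ⟨[], _, W0, .three h m', rfl⟩

theorem Alive.of_dec {w W : List Letter} {q : Option Letter} (hW : Alive W) (hd : Dec (E q) w W) :
    Alive w := by
  intro w' hw
  suffices ∃ W', Dec (E q) w' W' ∧ Alive W' by
    obtain ⟨W', h1, h2⟩ := this
    exact fun hb => h2 _ .refl (h1.hasBad hb)
  induction hw with
  | refl => exact ⟨W, hd, hW⟩
  | tail _ hs ih =>
    obtain ⟨W', h1, h2⟩ := ih
    obtain ⟨W'', h3, h4⟩ := h1.step hs
    exact ⟨W'', h3, h4.elim (· ▸ h2) fun h => h.alive.1 h2⟩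

theorem exists_alive (k : ℕ) : ∃ w, Alive w ∧ w.length = 2 ^ k := by
  induction k with
  | zero => exact ⟨[(N, hs)], alive_singleton _, rfl⟩
  | succ k ih =>
    obtain ⟨w, h1, h2⟩ := ih
    exact ⟨sub w, h1.of_dec (dec_sub none w), by simp [sub, h2, pow_succ, List.length_flatMap]⟩

/-! ### The finitely presented semigroup -/

/-- The generators; `none` is the zero. -/
abbrev Gen := Option Letter

/-- The defining relations. -/
inductive Rule : List Gen → List Gen → Prop
  | core {l r} (h : Step0 l r) : Rule (l.map some) (r.map some)
  | bad {l} (h : Bad0 l) : Rule (l.map some) [none]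
  | zero_mul (a) : Rule [none, a] [none]
  | mul_zero (a) : Rule [a, none] [none]

/-- A numbering of the generators. -/
noncomputable def enum : Gen ≃ Fin (Fintype.card Gen) := Fintype.equivFin Gen

/-- The free semigroup on the generators. -/
abbrev Words := FreeSemigroup (Fin (Fintype.card Gen))

/-- An element of the free semigroup as a list of generators. -/
noncomputable def word (u : Words) : List Gen := (u.head :: u.tail).map enum.symm

theorem word_of (a : Gen) : word (.of (enum a)) = [a] := by simp [word, FreeSemigroup.of]

theorem word_mul (u v : Words) : word (u * v) = word u ++ word v := by simp [word]

theorem word_injective : Function.Injective word := by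
  intro u v h
  have h := List.map_injective_iff.2 enum.symm.injective h
  injection h with h1 h2
  exact FreeSemigroup.ext h1 h2

theorem exists_word {w : List Gen} (hw : w ≠ []) : ∃ u, word u = w := by
  obtain ⟨a, w, rfl⟩ := List.exists_cons_of_ne_nil hw
  exact ⟨⟨enum a, w.map enum⟩, by simp [word]⟩

/-- The defining relations in the free semigroup. -/
def Relators : Set (Words × Words) := {p | Rule (word p.1) (word p.2)}

theorem Step0.length {l r} (h : Step0 l r) : l.length = r.length := by cases h <;> rfl

theorem Rule.length_le {l r} (h : Rule l r) : l.length ≤ 3 ∧ r.length ≤ 3 := by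
  cases h with
  | core h => cases h <;> simp
  | bad h => cases h <;> simp
  | _ => simp

theorem Rule.ne_nil {l r} (h : Rule l r) : l ≠ [] ∧ r ≠ [] := by
  cases h with
  | core h => cases h <;> simp
  | bad h => cases h <;> simp
  | _ => simp

theorem Relators_finite : Relators.Finite := by
  have h := List.finite_length_le Gen 3
  exact ((h.prod h).preimage (word_injective.prodMap word_injective).injOn).subset
    fun p hp => Rule.length_le hp

/-- The semigroup with the given generators and relations. -/
abbrev Sem := (conGen fun u v => (u, v) ∈ Relators).Quotient

/-- A generator, in `Sem` with a unit adjoined, where empty products are available. -/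
noncomputable def gen (a : Gen) : WithOne Sem := ((FreeSemigroup.of (enum a) : Words) : Sem)

/-- The product of a list of generators. -/
noncomputable def ev (w : List Gen) : WithOne Sem := (w.map gen).prod

theorem coe_word (u : Words) : (((u : Words) : Sem) : WithOne Sem) = ev (word u) := by
  induction u using FreeSemigroup.recOnMul with
  | ih1 i => obtain ⟨a, rfl⟩ := enum.surjective i; simp [word_of, ev, gen]
  | ih2 i v h1 h2 => rw [Con.coe_mul, WithOne.coe_mul, h1, h2, word_mul, ev, ev, ev]; simp

theorem ev_eq {l r} (h : Rule l r) : ev l = ev r := by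
  obtain ⟨u, rfl⟩ := exists_word h.ne_nil.1
  obtain ⟨v, rfl⟩ := exists_word h.ne_nil.2
  rw [← coe_word, ← coe_word]
  exact congrArg _ ((Con.eq _).2 (.of _ _ h))

theorem one_or_word (x : WithOne Sem) : x = 1 ∨ ∃ u, x = ev (word u) := by
  cases x with
  | one => exact .inl rfl
  | coe x => induction x using Con.induction_on with | H u => exact .inr ⟨u, coe_word u⟩

/-- `Sem` with a unit adjoined is a model of the relations. -/
noncomputable def model : Model (WithOne Sem) where
  G l := gen (some l)
  O := gen none
  O_mul x := by
    have key : ∀ w, gen none * ev w = gen none := by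
      intro w
      induction w with
      | nil => simp [ev]
      | cons a w ih =>
        have := ev_eq (.zero_mul a)
        simp only [ev, List.map_cons, List.prod_cons, List.map_nil, List.prod_nil, mul_one]
          at this ih ⊢
        rw [← mul_assoc, this, ih]
    obtain rfl | ⟨u, rfl⟩ := one_or_word x
    · simp
    · exact key _
  mul_O x := by
    have key : ∀ w, ev w * gen none = gen none := by
      intro w
      induction w with
      | nil => simp [ev]
      | cons a w ih =>
        have := ev_eq (.mul_zero a)
        simp only [ev, List.map_cons, List.prod_cons, List.map_nil, List.prod_nil, mul_one]
          at this ih ⊢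
        rw [mul_assoc, ih, this]
    obtain rfl | ⟨u, rfl⟩ := one_or_word x
    · simp
    · exact key _
  two q := by simpa [ev] using ev_eq (.core (.two q))
  three q m := by simpa [ev] using ev_eq (.core (.three q m))
  bad2 q := by simpa [ev] using ev_eq (.bad (.two q))
  bad3 q m := by simpa [ev] using ev_eq (.bad (.three q m))

/-- The substitution `σ` on the generators, fixing the zero. -/
noncomputable def image : Gen → WithOne Sem
  | none => model.O
  | some l => model.sg l

theorem lift_word (f : Gen → WithOne Sem) (u : Words) :
    FreeSemigroup.lift (f ∘ enum.symm) u = ((word u).map f).prod := by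
  induction u using FreeSemigroup.recOnMul with
  | ih1 i => obtain ⟨a, rfl⟩ := enum.surjective i; simp [word_of]
  | ih2 i v h1 h2 => rw [map_mul, h1, h2, word_mul]; simp

theorem image_eq {l r} (h : Rule l r) : (l.map image).prod = (r.map image).prod := by
  cases h with
  | core h => cases h with
    | two q => simpa [image] using model.sg_two q
    | three q m => simpa [image] using model.sg_three q m
  | bad h => cases h with
    | two q => simpa [image] using model.sg_bad2 q
    | three q m => simpa [image] using model.sg_bad3 q m
  | zero_mul a => simp [image, model.O_mul]
  | mul_zero a => simp [image, model.mul_O]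

theorem conGen_le_ker :
    conGen (fun u v => (u, v) ∈ Relators) ≤ Con.ker (FreeSemigroup.lift (image ∘ enum.symm)) :=
  Con.conGen_le.2 fun u v h => by
    rw [Con.ker_rel, lift_word, lift_word]; exact image_eq h

/-- The endomorphism induced by `σ`. -/
noncomputable def sgHom : WithOne Sem →* WithOne Sem :=
  WithOne.lift
    { toFun := fun x => Con.liftOn x (FreeSemigroup.lift (image ∘ enum.symm))
        fun _ _ h => conGen_le_ker h
      map_mul' := fun x y => by
        induction x, y using Con.induction_on₂ with
        | H u v => exact map_mul (FreeSemigroup.lift (image ∘ enum.symm)) u v }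

theorem sgHom_gen (a : Gen) : sgHom (gen a) = image a := by
  rw [gen, sgHom, WithOne.lift_coe]
  change FreeSemigroup.lift (image ∘ enum.symm) (FreeSemigroup.of (enum a)) = _
  simp

theorem coe_iterMul (x : Sem) (k : ℕ) : ((iterMul x k : Sem) : WithOne Sem) = x ^ (k + 1) := by
  induction k with
  | zero => simp [iterMul]
  | succ k ih => rw [iterMul, WithOne.coe_mul, ih, pow_succ _ (k + 1)]

/-! ### Ninth powers vanish -/

theorem V_eq (f : ℤ → Letter) (w : List Letter) (i : ℤ)
    (h : ∀ (k : ℕ) (hk : k < w.length), f (i + k) = w[k]) :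
    model.V f i w.length = ev (w.map some) := by
  induction w generalizing i with
  | nil => simp [Model.V, ev]
  | cons a w ih =>
    have h0 := h 0 (by simp)
    have := ih (i + 1) fun k hk => by
      have := h (k + 1) (by simpa using hk)
      rw [show i + 1 + (k : ℤ) = i + ((k + 1 : ℕ) : ℤ) by push_cast; ring, this]; simp
    rw [List.length_cons, Model.V, this]
    simp only [Nat.cast_zero, add_zero, List.getElem_cons_zero] at h0
    rw [h0]; simp [ev, model]

theorem V_pow (f : ℤ → Letter) (m : ℕ) (hf : ∀ i, f (i + m) = f i) (i : ℤ) (k : ℕ) :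
    model.V f i (k * m) = model.V f i m ^ k := by
  have sh : ∀ l i, model.V f (i + m) l = model.V f i l := by
    intro l
    induction l with
    | zero => intro i; rfl
    | succ l ih => intro i; rw [Model.V, Model.V, hf, add_right_comm, ih]
  induction k with
  | zero => simp [Model.V]
  | succ k ih => rw [Nat.succ_mul, Nat.add_comm, Model.V_add, sh, ih, pow_succ']

theorem pow_nine (w : List Gen) (hw : w ≠ []) : ev w ^ 9 = model.O := by
  by_cases hn : none ∈ w
  · obtain ⟨l, r, rfl⟩ := List.append_of_mem hn
    have : ev (l ++ none :: r) = model.O := by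
      rw [ev, List.map_append, List.prod_append, List.map_cons, List.prod_cons]
      change _ * (model.O * _) = _
      rw [model.O_mul, model.mul_O]
    rw [this, pow_succ, model.mul_O]
  · obtain ⟨w, rfl⟩ : ∃ v : List Letter, w = v.map some := by
      refine ⟨w.reduceOption, ?_⟩
      clear hw
      induction w with
      | nil => rfl
      | cons a w ih =>
        simp only [List.mem_cons, not_or] at hn
        cases a with
        | none => exact absurd rfl hn.1
        | some a => rw [List.reduceOption_cons_of_some, List.map_cons, ← ih hn.2]
    have hpos : 0 < w.length := List.length_pos_iff.2 (by simpa using hw)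
    let f : ℤ → Letter := fun i => w.getD (i % w.length).toNat (N, hs)
    have hf : ∀ i, f (i + w.length) = f i := fun i => by simp [f]
    have hv : model.V f 0 w.length = ev (w.map some) := by
      apply V_eq
      intro k hk
      have : ((0 + (k : ℤ)) % w.length).toNat = k := by
        rw [zero_add, Int.emod_eq_of_lt (by omega) (by omega), Int.toNat_natCast]
      simp only [f, this]
      simp [hk]
    rw [← hv, ← V_pow f _ hf]
    exact model.V_zero_of_sub f 0 (9 * w.length - 7) _ 0
      (model.nil (Sg := sgHom) (fun l => sgHom_gen (some l)) (sgHom_gen none) _ hpos f hf _)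
      (by simp)

theorem pow_eq (x : Sem) : iterMul x 8 = iterMul x 9 := by
  apply WithOne.coe_injective
  induction x using Con.induction_on with
  | H u =>
    rw [coe_iterMul, coe_iterMul, pow_succ _ 9, coe_word, pow_nine _ (by simp [word]), model.O_mul]

/-! ### The semigroup is infinite -/

/-- `w` is an alive word of length `k`; in particular the zero does not occur in it. -/
def Good (w : List Gen) (k : ℕ) : Prop := ∃ v, w = v.map some ∧ Alive v ∧ v.length = k

theorem not_good {w k} (h : none ∈ w) : ¬ Good w k := by
  rintro ⟨v, rfl, -⟩; simp at h

theorem Step0.good {l r : List Letter} (h : Step0 l r ∨ Step0 r l) {p s : List Gen} {k}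
    (hg : Good (p ++ (l.map some ++ s)) k) : Good (p ++ (r.map some ++ s)) k := by
  obtain ⟨v, h1, h2, h3⟩ := hg
  obtain ⟨p, v, rfl, rfl, h4⟩ := List.map_eq_append_iff.1 h1.symm
  obtain ⟨l', s, rfl, h5, rfl⟩ := List.map_eq_append_iff.1 h4
  obtain rfl := List.map_injective_iff.2 (Option.some_injective _) h5
  refine ⟨p ++ (r ++ s), by simp, (Step.alive ⟨p, _, _, s, h, rfl, rfl⟩).1 h2, ?_⟩
  have : l'.length = r.length := h.elim (·.length) (·.length.symm)
  simpa [this] using h3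

theorem Rule.good {l r} (h : Rule l r) (p s : List Gen) (k : ℕ) :
    Good (p ++ (l ++ s)) k ↔ Good (p ++ (r ++ s)) k := by
  cases h with
  | core h => exact ⟨Step0.good (.inl h), Step0.good (.inr h)⟩
  | @bad l h =>
    refine iff_of_false ?_ (not_good (by simp))
    rintro ⟨v, h1, h2, -⟩
    obtain ⟨p, v, rfl, rfl, h4⟩ := List.map_eq_append_iff.1 h1.symm
    obtain ⟨l', s, rfl, h5, rfl⟩ := List.map_eq_append_iff.1 h4
    obtain rfl := List.map_injective_iff.2 (Option.some_injective _) h5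
    exact h2 _ .refl ⟨p, _, s, h, rfl⟩
  | zero_mul a => exact iff_of_false (not_good (by simp)) (not_good (by simp))
  | mul_zero a => exact iff_of_false (not_good (by simp)) (not_good (by simp))

/-- Two words are congruent if replacing one by the other never affects whether a word is alive of a
given length. -/
def goodCon : Con Words where
  r u v := ∀ p s k, Good (p ++ (word u ++ s)) k ↔ Good (p ++ (word v ++ s)) k
  iseqv := ⟨fun _ _ _ _ => .rfl, fun h p s k => (h p s k).symm,
    fun h h' p s k => (h p s k).trans (h' p s k)⟩
  mul' {u v u' v'} h h' p s k := by
    rw [word_mul, word_mul, List.append_assoc, List.append_assoc, h, ← List.append_assoc, h',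
      List.append_assoc]

theorem conGen_le_goodCon : conGen (fun u v => (u, v) ∈ Relators) ≤ goodCon :=
  Con.conGen_le.2 fun _ _ h => Rule.good h

instance : Infinite Sem := by
  choose w h1 h2 using exists_alive
  have hw : ∀ k, (w k).map some ≠ [] := fun k h => by
    have h := congrArg List.length h
    rw [List.length_map, h2] at h
    exact absurd h (by simp)
  choose u hu using fun k => exists_word (hw k)
  refine Infinite.of_injective (fun k => (u k : Sem)) fun i j hij => ?_
  have := (conGen_le_goodCon ((Con.eq _).1 hij) [] [] (2 ^ i)).1 ⟨w i, by simp [hu], h1 i, h2 i⟩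
  obtain ⟨v, e1, -, e3⟩ := this
  have e2 := congrArg List.length e1
  simp only [hu, List.nil_append, List.append_nil, List.length_map, h2, e3] at e2
  exact (Nat.pow_right_injective le_rfl e2).symm

end SelfSimulation

/-- There exists a finitely presented infinite semigroup satisfying the identity
`x⁹ = x¹⁰`: a quotient of a free semigroup on finitely many generators by the
congruence generated by a finite set of relations. -/
theorem exists_finitely_presented_infinite_semigroup_x9_eq_x10 :
    ∃ (n : ℕ) (R : Set (FreeSemigroup (Fin n) × FreeSemigroup (Fin n))),
      R.Finite ∧
      Infinite (conGen (fun u v => (u, v) ∈ R)).Quotient ∧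
      ∀ x : (conGen (fun u v => (u, v) ∈ R)).Quotient,
        iterMul x 8 = iterMul x 9 := by
  exact ⟨_, SelfSimulation.Relators, SelfSimulation.Relators_finite, inferInstance,
    SelfSimulation.pow_eq⟩
end

section
/- There exist a natural number n and a finite set R of pairs of elements of the free semigroup on n generators, in which every pair (u, v) ∈ R satisfies: either u and v both have length 7, or v is a fixed designated word (representing zero) — such that the quotient S of the free semigroup on n generators by the congruence generated by R is infinite, has a zero element z equal to the image of the designated word, and satisfies x⁹ = z for every element x of S. -/
namespace SelfSim

/-! ### The rewriting system -/

/-- The controls, which also serve as payloads. The final digit is the parity of the position at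
which the control occurs in a nonzero word, up to a common shift. -/
inductive Ctl
  | i0 | r0 | s0 | j0 | f0 | h0 | m0 | k0
  | i1 | l1 | g1 | t1 | f1 | p1 | k1 | n1

/-- Letters: pairs of a payload and a control. -/
abbrev Q := Ctl × Ctl

open Ctl

/-- Controls allowed in the first place of a frame. -/
inductive XL : Ctl → Prop
  | i0 : XL i0
  | r0 : XL r0
  | j0 : XL j0

/-- Controls allowed in the second place of a frame. -/
inductive Y : Ctl → Prop
  | l1 : Y l1
  | g1 : Y g1

/-- Controls allowed in the third place of a frame. -/
inductive Zs : Ctl → Prop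
  | r0 : Zs r0
  | s0 : Zs s0

/-- Controls allowed in the fourth place of a frame. -/
inductive W : Ctl → Prop
  | i1 : W i1
  | l1 : W l1
  | t1 : W t1

/-- `Rho a b c d` is the rule `a b = c d` on two-letter words. The rule `arm` turns the controls of
two neighbouring blocks `i0 i1 i0 i1` into the frame `i0 l1 r0 i1`. The other rules gather the four
payloads `v₁ c₁ v₂ c₂` of a substituted frame at its centre: `la`, `lb`, `lc` turn the left half, with
payloads `v₁ x c₁ y`, into one with payloads `x y v₁ c₁`, and `ra`, `rb`, `rc` turn the right half, with
payloads `v₂ z c₂ w`, into one with payloads `v₂ c₂ z w`. -/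
inductive Rho : Q → Q → Q → Q → Prop
  | arm (c v) : Rho (c, i1) (v, i0) (c, l1) (v, r0)
  | la (v) {x} : XL x → Rho (v, i0) (x, i1) (x, f0) (v, f1)
  | lb (c) {y} : Y y → Rho (c, i0) (y, i1) (y, h0) (c, g1)
  | lc (v y) : Rho (v, f1) (y, h0) (y, p1) (v, j0)
  | ra (v) {z} : Zs z → Rho (v, i0) (z, i1) (v, s0) (z, k1)
  | rb (c) {w} : W w → Rho (c, i0) (w, i1) (c, m0) (w, n1)
  | rc (z c) : Rho (z, k1) (c, m0) (c, t1) (z, k0)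

/-- The framed form of the pair `a, b`: their four components as payloads under the controls
`x, y, z, w`. -/
def quad (x y z w : Ctl) (a b : Q) : List Q := [(a.1, x), (a.2, y), (b.1, z), (b.2, w)]

/-- The ways of presenting a pair of letters on which a rule may act: plainly, or framed. -/
inductive Pat : (Q → Q → List Q) → Prop
  | pair : Pat fun a b => [a, b]
  | framed {x y z w} : XL x → Y y → Zs z → W w → Pat (quad x y z w)

/-- States of the transducer. Between two blocks it is in `S0`, or in `E` if the blocks have been
armed; `Pfp` and `Pst` belong to the two halves of a gathered frame, and the other states remember
a payload read in the current block. -/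
inductive St
  | S0 | E
  | Pi (v : Ctl) | Pf (x : Ctl) | Pfp (x y : Ctl) | Ph (y : Ctl)
  | Ps (v : Ctl) | Pst (v c : Ctl) | Pm (c : Ctl)

open St

/-- `Stp σ a σ' o`: in state `σ` the transducer reads `a`, moves to `σ'` and writes `o`. On a
whole number of blocks, read from `S0` to `S0`, the output is a preimage of the input under `Φ`, up to
congruence. -/
inductive Stp : St → Q → St → List Q → Prop
  | i0 (v) : Stp S0 (v, i0) (Pi v) []
  | f0 (x) : Stp S0 (x, f0) (Pf x) []
  | h0 (y) : Stp S0 (y, h0) (Ph y) []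
  | s0 (v) : Stp S0 (v, s0) (Ps v) []
  | m0 (c) : Stp S0 (c, m0) (Pm c) []
  | r0 (v) : Stp E (v, r0) (Pi v) []
  | i1 (v c) : Stp (Pi v) (c, i1) S0 [(v, c)]
  | l1 (v c) : Stp (Pi v) (c, l1) E [(v, c)]
  | f1 (v) {x} : XL x → Stp (Pf x) (v, f1) S0 [(v, x)]
  | p1 (x y) : Stp (Pf x) (y, p1) (Pfp x y) []
  | j0 (v) {x} (y) : XL x → Stp (Pfp x y) (v, j0) (Ph y) [(v, x)]
  | g1 (c) {y} : Y y → Stp (Ph y) (c, g1) S0 [(c, y)]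
  | k1 (v) {z} : Zs z → Stp (Ps v) (z, k1) S0 [(v, z)]
  | t1 (v c) : Stp (Ps v) (c, t1) (Pst v c) []
  | k0 (v) {z} (c) : Zs z → Stp (Pst v c) (z, k0) (Pm c) [(v, z)]
  | n1 (c) {w} : W w → Stp (Pm c) (w, n1) S0 [(c, w)]

/-- Reading a word letter by letter, the outputs being concatenated. -/
inductive Run : St → List Q → St → List Q → Prop
  | nil (σ) : Run σ [] σ []
  | cons {σ σ' σ'' a o T o'} : Stp σ a σ' o → Run σ' T σ'' o' → Run σ (a :: T) σ'' (o ++ o')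

/-- The pair `a, b` is unreadable from every state; such pairs, plain or framed, are set to zero. -/
def Bad (a b : Q) : Prop := ∀ σ σ' o, ¬ Run σ [a, b] σ' o

/-- One application of a rule, plain or framed, in context. -/
def Step (T T' : List Q) : Prop :=
  ∃ α β U a b c d, Pat U ∧ Rho a b c d ∧ T = α ++ U a b ++ β ∧ T' = α ++ U c d ++ β

/-- The congruence on words generated by the rules (zero relations not included). -/
def Eqv : List Q → List Q → Prop := Relation.EqvGen Step

/-- The words congruent to one with an unreadable pair, plain or framed, as a factor. -/
def Z (T : List Q) : Prop :=
  ∃ α β U a b, Pat U ∧ Bad a b ∧ Eqv T (α ++ U a b ++ β)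

lemma Eqv.refl (T) : Eqv T T := Relation.EqvGen.refl T
lemma Eqv.symm {T T'} (h : Eqv T T') : Eqv T' T := Relation.EqvGen.symm _ _ h
lemma Eqv.trans {T T' T''} (h : Eqv T T') (h' : Eqv T' T'') : Eqv T T'' :=
  Relation.EqvGen.trans _ _ _ h h'
lemma Step.eqv {T T'} (h : Step T T') : Eqv T T' := Relation.EqvGen.rel _ _ h

lemma Step.ctx {T T'} (h : Step T T') (α β) : Step (α ++ T ++ β) (α ++ T' ++ β) := by
  obtain ⟨α', β', U, a, b, c, d, hU, hr, rfl, rfl⟩ := h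
  exact ⟨α ++ α', β' ++ β, U, a, b, c, d, hU, hr, by simp, by simp⟩

lemma Eqv.ctx {T T'} (h : Eqv T T') (α β) : Eqv (α ++ T ++ β) (α ++ T' ++ β) := by
  induction h with
  | rel _ _ h => exact (h.ctx α β).eqv
  | refl _ => exact Eqv.refl _
  | symm _ _ _ ih => exact ih.symm
  | trans _ _ _ _ _ ih ih' => exact ih.trans ih'

lemma Eqv.app {T T' V V'} (h : Eqv T T') (h' : Eqv V V') : Eqv (T ++ V) (T' ++ V') := by
  simpa using (h.ctx [] V).trans (by simpa using h'.ctx T' [])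

lemma Z.congr {T T'} (h : Eqv T T') (hz : Z T) : Z T' := by
  obtain ⟨α, β, U, a, b, hU, hb, e⟩ := hz
  exact ⟨α, β, U, a, b, hU, hb, h.symm.trans e⟩

lemma Z.ctx {T} (hz : Z T) (α β) : Z (α ++ T ++ β) := by
  obtain ⟨α', β', U, a, b, hU, hb, e⟩ := hz
  exact ⟨α ++ α', β' ++ β, U, a, b, hU, hb, by simpa using e.ctx α β⟩

lemma Rho.eqv {a b c d} (h : Rho a b c d) {U} (hU : Pat U) : Eqv (U a b) (U c d) :=
  Step.eqv ⟨[], [], U, a, b, c, d, hU, h, by simp, by simp⟩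

lemma Pat.length {U} (hU : Pat U) (a b c d) : (U a b).length = (U c d).length := by
  cases hU <;> simp [quad]

lemma Pat.two_le {U} (hU : Pat U) (a b) : 2 ≤ (U a b).length := by
  cases hU <;> simp [quad]

lemma Eqv.length {T T'} (h : Eqv T T') : T.length = T'.length := by
  induction h with
  | rel _ _ h =>
    obtain ⟨α', β', U, a, b, c, d, hU, hr, rfl, rfl⟩ := h
    simp [hU.length a b c d]
  | refl _ => rfl
  | symm _ _ _ ih => exact ih.symm
  | trans _ _ _ _ _ ih ih' => exact ih.trans ih'

lemma Z.two_le {T} (h : Z T) : 2 ≤ T.length := by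
  obtain ⟨α', β', U, a, b, hU, hb, e⟩ := h
  have := e.length
  have := hU.two_le a b
  simp at *
  omega

/-! ### The substitution -/

/-- The substitution `(v, c) ↦ (v, i0) (c, i1)`. -/
def Φ (w : List Q) : List Q := w.flatMap fun a => [(a.1, i0), (a.2, i1)]

lemma Φ_append (u v) : Φ (u ++ v) = Φ u ++ Φ v := by simp [Φ]
@[simp] lemma Φ_nil : Φ [] = [] := rfl
@[simp] lemma Φ_cons (a w) : Φ (a :: w) = (a.1, i0) :: (a.2, i1) :: Φ w := rfl

lemma length_Φ (w) : (Φ w).length = 2 * w.length := by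
  induction w with
  | nil => rfl
  | cons a w ih => simp [ih]; ring

/-- The image under `Φ` of a plain or framed pair contains, up to congruence, a frame around the
same pair, and what surrounds that frame does not depend on the pair. Hence rules and zero relations
pass through `Φ`. -/
lemma exists_simulation {U} (hU : Pat U) :
    ∃ (V : Q → Q → List Q) (L M : List Q), Pat V ∧
      ∀ a b, Eqv (Φ (U a b)) (L ++ V a b ++ M) := by
  cases hU with
  | pair =>
    refine ⟨quad i0 l1 r0 i1, [], [], .framed .i0 .l1 .r0 .i1, fun a b => ?_⟩
    exact ((Rho.arm a.2 b.1).eqv .pair).ctx [(a.1, i0)] [(b.2, i1)]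
  | @framed x y z w hx hy hz hw =>
    refine ⟨quad j0 g1 s0 t1, [(x, f0), (y, p1)], [(z, k0), (w, n1)],
      .framed .j0 .g1 .s0 .t1, fun a b => ?_⟩
    -- `h1` pairs up the payloads with the old frame controls; `h2` and `h3` then exchange the inner
    -- neighbours on the left and on the right half.
    have h1 := ((((Rho.la a.1 hx).eqv .pair).app ((Rho.lb a.2 hy).eqv .pair)).app
      ((Rho.ra b.1 hz).eqv .pair)).app ((Rho.rb b.2 hw).eqv .pair)
    have h2 := ((Rho.lc a.1 y).eqv .pair).ctx [(x, f0)]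
      [(a.2, g1), (b.1, s0), (z, k1), (b.2, m0), (w, n1)]
    have h3 := ((Rho.rc z b.2).eqv .pair).ctx
      [(x, f0), (y, p1), (a.1, j0), (a.2, g1), (b.1, s0)] [(w, n1)]
    exact (h1.trans h2).trans h3

lemma Step.Φ {T T'} (h : Step T T') : Eqv (Φ T) (Φ T') := by
  obtain ⟨α, β, U, a, b, c, d, hU, hr, rfl, rfl⟩ := h
  obtain ⟨V, L, M, hV, h⟩ := exists_simulation hU
  have := ((h a b).trans ((hr.eqv hV).ctx L M)).trans (h c d).symm
  simpa [Φ_append] using this.ctx (SelfSim.Φ α) (SelfSim.Φ β)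

lemma Eqv.Φ {T T'} (h : Eqv T T') : Eqv (Φ T) (Φ T') := by
  induction h with
  | rel _ _ h => exact h.Φ
  | refl _ => exact Eqv.refl _
  | symm _ _ _ ih => exact ih.symm
  | trans _ _ _ _ _ ih ih' => exact ih.trans ih'

lemma Z.Φ {T} (h : Z T) : Z (Φ T) := by
  obtain ⟨α, β, U, a, b, hU, hb, e⟩ := h
  obtain ⟨V, L, M, hV, h⟩ := exists_simulation hU
  refine ⟨SelfSim.Φ α ++ L, M ++ SelfSim.Φ β, V, a, b, hV, hb, e.Φ.trans ?_⟩
  simpa [Φ_append] using (h a b).ctx (SelfSim.Φ α) (SelfSim.Φ β)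

/-! ### The transducer -/

lemma Run.append {σ T σ' o} (h : Run σ T σ' o) {T' σ'' o'} (h' : Run σ' T' σ'' o') :
    Run σ (T ++ T') σ'' (o ++ o') := by
  induction h with
  | nil => simpa using h'
  | cons s _ ih => simpa using Run.cons s (ih h')

lemma Run.split {T T' : List Q} {σ σ'' o} (h : Run σ (T ++ T') σ'' o) :
    ∃ σ' o₁ o₂, Run σ T σ' o₁ ∧ Run σ' T' σ'' o₂ ∧ o = o₁ ++ o₂ := by
  induction T generalizing σ o with
  | nil => exact ⟨σ, [], o, .nil σ, h, rfl⟩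
  | cons a T ih =>
    cases h with
    | cons s r =>
      obtain ⟨σ', o₁, o₂, h1, h2, rfl⟩ := ih r
      exact ⟨σ', _, o₂, .cons s h1, h2, by simp⟩

lemma Run.Φ (w) : Run S0 (Φ w) S0 w := by
  induction w with
  | nil => exact .nil _
  | cons a w ih => exact .cons (.i0 a.1) (.cons (.i1 a.1 a.2) ih)

lemma Stp.run_two {σ σ' σ'' a b o o' p} (h : Stp σ a σ' o) (h' : Stp σ' b σ'' o')
    (e : p = o ++ o') : Run σ [a, b] σ'' p := by
  simpa [e] using Run.cons h (.cons h' (.nil _))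

lemma Stp.run_four {σ₀ σ₁ σ₂ σ₃ σ₄ a b c d o₁ o₂ o₃ o₄ p} (h₁ : Stp σ₀ a σ₁ o₁)
    (h₂ : Stp σ₁ b σ₂ o₂) (h₃ : Stp σ₂ c σ₃ o₃) (h₄ : Stp σ₃ d σ₄ o₄)
    (e : p = o₁ ++ o₂ ++ o₃ ++ o₄) : Run σ₀ [a, b, c, d] σ₄ p := by
  simpa [e] using Run.cons h₁ (.cons h₂ (.cons h₃ (.cons h₄ (.nil _))))

/-- The transducer does not distinguish the two sides of a rule. -/
lemma Rho.run_iff {a b c d} (h : Rho a b c d) (σ σ' o) :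
    Run σ [a, b] σ' o ↔ Run σ [c, d] σ' o := by
  constructor
  · rintro (_ | ⟨s, _ | ⟨s', _ | _⟩⟩)
    cases h <;> cases s <;> cases s' <;> first
      | (rename_i h _; cases h; done)
      | (rename_i h; cases h; done)
      | exact Stp.run_two (by constructor) (by constructor <;> assumption) (by rfl)
  · rintro (_ | ⟨s, _ | ⟨s', _ | _⟩⟩)
    cases h <;> cases s <;> cases s' <;> first
      | (rename_i h _; cases h; done)
      | (rename_i h; cases h; done)
      | exact Stp.run_two (by constructor <;> assumption) (by constructor) (by rfl)

/-- A frame read by the transducer either arises from an armed pair of blocks, in which case the pair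
is written out, or from a gathered frame; then only its first two payloads are written, under the
remembered controls, and the last two are kept in the state `Pst`. -/
lemma run_quad {x y z w σ σ' o} (hx : XL x) (hy : Y y) (hz : Zs z) (hw : W w) {a b : Q}
    (h : Run σ (quad x y z w a b) σ' o) :
    (o = [a, b] ∧ ∀ c d, Run σ (quad x y z w c d) σ' [c, d]) ∨
    ∃ x' y', XL x' ∧ Y y' ∧ o = [(a.1, x'), (a.2, y')] ∧ σ' = Pst b.1 b.2 ∧
      ∀ c d : Q, Run σ (quad x y z w c d) (Pst d.1 d.2) [(c.1, x'), (c.2, y')] := by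
  obtain _ | ⟨s1, _ | ⟨s2, _ | ⟨s3, _ | ⟨s4, _ | _⟩⟩⟩⟩ := h
  cases hx <;> cases s1 <;> cases hy <;> cases s2 <;> cases hz <;> cases s3 <;> cases hw <;>
    cases s4
  all_goals first
    | exact .inl ⟨rfl, fun c d => Stp.run_four (by constructor)
        (by constructor) (by constructor) (by constructor) (by rfl)⟩
    | exact .inr ⟨_, _, by assumption, by assumption, rfl, rfl, fun c d => Stp.run_four
        (by constructor; assumption) (by constructor; assumption) (by constructor)
        (by constructor) (by rfl)⟩

/-- From `Pst`, a run that ends in `S0` must first write the two remembered payloads under controls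
fitting the right half of a frame. -/
lemma run_Pst {b : Q} {β o} (h : Run (Pst b.1 b.2) β S0 o) :
    ∃ z w o', Zs z ∧ W w ∧ o = (b.1, z) :: (b.2, w) :: o' ∧
      ∀ d : Q, Run (Pst d.1 d.2) β S0 ((d.1, z) :: (d.2, w) :: o') := by
  obtain _ | ⟨s1, _ | ⟨s2, h⟩⟩ := h
  · cases s1
  · cases s1
    cases s2
    exact ⟨_, _, _, by assumption, by assumption, rfl, fun d =>
      .cons (.k0 _ _ (by assumption)) (.cons (.n1 _ (by assumption)) h)⟩

/-- A framed pair in the input shows up as the same pair, plain or framed, in the output, and may be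
replaced by any other pair simultaneously in both. -/
lemma run_ctx_quad {x y z w} (hx : XL x) (hy : Y y) (hz : Zs z) (hw : W w) {a b : Q} {α β o}
    (h : Run S0 (α ++ quad x y z w a b ++ β) S0 o) :
    ∃ α' β' V, Pat V ∧ o = α' ++ V a b ++ β' ∧
      ∀ c d, Run S0 (α ++ quad x y z w c d ++ β) S0 (α' ++ V c d ++ β') := by
  obtain ⟨σ, o₁, o₂, h12, h2, rfl⟩ := h.split
  obtain ⟨σ', o₁, o₃, h1, h3, rfl⟩ := h12.split
  obtain ⟨rfl, hr⟩ | ⟨x', y', hx', hy', rfl, rfl, hr⟩ := run_quad hx hy hz hw h3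
  · exact ⟨o₁, o₂, _, .pair, by simp, fun c d => (h1.append (hr c d)).append h2⟩
  · obtain ⟨z', w', o', hz', hw', rfl, h'⟩ := run_Pst h2
    refine ⟨o₁, o', _, .framed hx' hy' hz' hw', by simp [quad], fun c d => ?_⟩
    simpa [quad] using (h1.append (hr c d)).append (h' d)

/-- The words that the transducer can read from `S0` to `S0` with a nonzero output. -/
def Good (T : List Q) : Prop := ∃ w, Run S0 T S0 w ∧ ¬ Z w

lemma Step.good {T T'} (h : Step T T') : Good T ↔ Good T' := by
  obtain ⟨α, β, U, a, b, c, d, hU, hr, rfl, rfl⟩ := h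
  cases hU with
  | pair =>
    constructor <;> rintro ⟨w, h, hz⟩ <;> refine ⟨w, ?_, hz⟩
    all_goals
      obtain ⟨σ, o₁, o₂, h12, h2, rfl⟩ := h.split
      obtain ⟨σ', o₁, o₃, h1, h3, rfl⟩ := h12.split
    · exact (h1.append ((hr.run_iff _ _ _).1 h3)).append h2
    · exact (h1.append ((hr.run_iff _ _ _).2 h3)).append h2
  | framed hx hy hz hw =>
    constructor <;> rintro ⟨_, h, hZ⟩
    all_goals
      obtain ⟨α', β', V, hV, rfl, h'⟩ := run_ctx_quad hx hy hz hw h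
      refine ⟨_, h' _ _, fun hZ' => hZ (hZ'.congr ?_)⟩
    · exact ((hr.eqv hV).ctx α' β').symm
    · exact (hr.eqv hV).ctx α' β'

lemma Eqv.good {T T'} (h : Eqv T T') : Good T ↔ Good T' := by
  induction h with
  | rel _ _ h => exact h.good
  | refl _ => rfl
  | symm _ _ _ ih => exact ih.symm
  | trans _ _ _ _ _ ih ih' => exact ih.trans ih'

lemma Good.not_Z {T} (h : Good T) : ¬ Z T := by
  rintro ⟨α, β, U, a, b, hU, hb, e⟩
  obtain ⟨w, h, hZ⟩ := e.good.1 h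
  cases hU with
  | pair =>
    obtain ⟨σ, o₁, o₂, h12, -, -⟩ := h.split
    obtain ⟨σ', o₁, o₃, -, h3, -⟩ := h12.split
    exact hb _ _ _ h3
  | framed hx hy hz hw =>
    obtain ⟨α', β', V, hV, rfl, -⟩ := run_ctx_quad hx hy hz hw h
    exact hZ ⟨α', β', V, a, b, hV, hb, .refl _⟩

/-- `Φ` preserves being nonzero, as the transducer reads `Φ w` with output `w`. -/
lemma not_Z_Φ {w} (h : ¬ Z w) : ¬ Z (Φ w) := Good.not_Z ⟨w, .Φ w, h⟩

/-- Iterated images of one letter under `Φ`. -/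
def long : ℕ → List Q
  | 0 => [(i0, i0)]
  | k + 1 => Φ (long k)

lemma not_Z_long (k) : ¬ Z (long k) := by
  induction k with
  | zero => exact fun h => by simpa [long] using h.two_le
  | succ k ih => exact not_Z_Φ ih

lemma length_long (k) : (long k).length = 2 ^ k := by
  induction k with
  | zero => rfl
  | succ k ih => rw [long, length_Φ, ih, pow_succ, mul_comm]

/-! ### Desubstitution -/

/-- The parity of a control. -/
def Ctl.odd : Ctl → Bool
  | .i1 | .l1 | .g1 | .t1 | .f1 | .p1 | .k1 | .n1 => true
  | _ => false

/-- The controls of letters readable in the state `S0`. -/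
inductive Opening : Ctl → Prop
  | i0 : Opening i0
  | f0 : Opening f0
  | h0 : Opening h0
  | s0 : Opening s0
  | m0 : Opening m0

/-- The controls of letters after which the transducer is in the state `S0`. -/
inductive Closing : Ctl → Prop
  | i1 : Closing i1
  | f1 : Closing f1
  | g1 : Closing g1
  | k1 : Closing k1
  | n1 : Closing n1

lemma exists_run_of_not_bad {a b} (h : ¬ Bad a b) : ∃ σ σ' o, Run σ [a, b] σ' o := by
  simpa [Bad] using h

lemma odd_of_not_bad {a b : Q} (h : ¬ Bad a b) : b.2.odd = !a.2.odd := by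
  obtain ⟨σ, σ', o, _ | ⟨s, _ | ⟨s', _ | _⟩⟩⟩ := exists_run_of_not_bad h
  cases s <;> cases s' <;> rfl

/-- A readable pair across a block boundary can be rewritten so that the boundary is in state `S0`. -/
lemma exists_cross {a b : Q} (h : ¬ Bad a b) (ha : a.2.odd = true) :
    ∃ c d : Q, Closing c.2 ∧ Opening d.2 ∧ Eqv [a, b] [c, d] := by
  obtain ⟨σ, σ', o, _ | ⟨s, _ | ⟨s', _ | _⟩⟩⟩ := exists_run_of_not_bad h
  cases s <;> (first | cases ha; done | skip) <;> cases s' <;> first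
    | exact ⟨_, _, by constructor, by constructor, .refl _⟩
    | exact ⟨_, _, .i1, .i0, ((Rho.arm _ _).eqv .pair).symm⟩
    | exact ⟨_, _, .f1, .h0, ((Rho.lc _ _).eqv .pair).symm⟩
    | exact ⟨_, _, .k1, .m0, ((Rho.rc _ _).eqv .pair).symm⟩

/-- A readable pair forming a block between two visits of `S0` is congruent to a substituted letter. -/
lemma exists_inner {a b : Q} (h : ¬ Bad a b) (ha : Opening a.2) (hb : Closing b.2) :
    ∃ q, Eqv [a, b] (Φ [q]) := by
  obtain ⟨σ, σ', o, _ | ⟨s, _ | ⟨s', _ | _⟩⟩⟩ := exists_run_of_not_bad h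
  cases s <;> (first | cases ha; done | skip) <;> cases s' <;> (first | cases hb; done | skip)
  · exact ⟨(_, _), .refl _⟩
  · exact ⟨(_, _), ((Rho.la _ (by assumption)).eqv .pair).symm⟩
  · exact ⟨(_, _), ((Rho.lb _ (by assumption)).eqv .pair).symm⟩
  · exact ⟨(_, _), ((Rho.ra _ (by assumption)).eqv .pair).symm⟩
  · exact ⟨(_, _), ((Rho.rb _ (by assumption)).eqv .pair).symm⟩

/-! ### Periodic words -/

/-- The first `n` letters of the sequence `x`. -/
def word (x : ℕ → Q) : ℕ → List Q
  | 0 => []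
  | n + 1 => x 0 :: word (fun i => x (i + 1)) n

lemma word_add (x m n) : word x (m + n) = word x m ++ word (fun i => x (i + m)) n := by
  induction m generalizing x with
  | zero => simp [word]
  | succ m ih =>
    rw [Nat.succ_add, word, word, ih]
    simp [Nat.add_assoc]

lemma Z_of_factor {x n} (s l) (h : s + l ≤ n) (hz : Z (word (fun i => x (i + s)) l)) :
    Z (word x n) := by
  obtain ⟨k, rfl⟩ := Nat.exists_eq_add_of_le h
  rw [word_add, word_add]
  exact hz.ctx _ _

lemma not_bad_of_not_Z {x n} (h : ¬ Z (word x n)) {i} (hi : i + 1 < n) :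
    ¬ Bad (x i) (x (i + 1)) := fun hb =>
  h (Z_of_factor i 2 (by omega) ⟨[], [], _, _, _, .pair, hb, by
    simpa [word, Nat.add_comm] using Eqv.refl _⟩)

lemma eqv_word {x y : ℕ → Q} {m}
    (h : ∀ j < m, Eqv [x (2 * j), x (2 * j + 1)] [y (2 * j), y (2 * j + 1)]) :
    Eqv (word x (2 * m)) (word y (2 * m)) := by
  induction m generalizing x y with
  | zero => exact .refl _
  | succ m ih =>
    exact (h 0 (by omega)).app (ih (x := fun i => x (i + 1 + 1)) (y := fun i => y (i + 1 + 1))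
      fun j hj => h (j + 1) (by omega))

lemma eqv_Φ_word {x y : ℕ → Q} {m}
    (h : ∀ j < m, Eqv [x (2 * j), x (2 * j + 1)] (Φ [y j])) :
    Eqv (word x (2 * m)) (Φ (word y m)) := by
  induction m generalizing x y with
  | zero => exact .refl _
  | succ m ih =>
    exact (h 0 (by omega)).app (ih (x := fun i => x (i + 1 + 1)) (y := fun i => y (i + 1))
      fun j hj => h (j + 1) (by omega))

/-- Desubstitution of a nonzero prefix of a sequence of period `2 * p` starting with an odd control:
all pairs across block boundaries are brought into standard form, then, after removal of the first
and last letter, the blocks are replaced by single letters. -/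
lemma exists_halving {x : ℕ → Q} {n p} (h0 : (x 0).2.odd = true)
    (hp : ∀ i, x (i + 2 * p) = x i) (hn : ¬ Z (word x n)) :
    ∃ y, (∀ i, y (i + p) = y i) ∧ ¬ Z (word y (n / 2 - 1)) := by
  have hodd : ∀ j, 2 * j < n → (x (2 * j)).2.odd = true := by
    intro j
    induction j with
    | zero => exact fun _ => h0
    | succ j ih =>
      intro hj
      have h1 := odd_of_not_bad (not_bad_of_not_Z hn (i := 2 * j) (by omega))
      have h2 := odd_of_not_bad (not_bad_of_not_Z hn (i := 2 * j + 1) (by omega))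
      rw [ih (by omega)] at h1
      rw [h1] at h2
      exact h2
  have hcross : ∀ a b : Q, ∃ c d : Q, ¬ Bad a b → a.2.odd = true →
      Closing c.2 ∧ Opening d.2 ∧ Eqv [a, b] [c, d] := by
    intro a b
    by_cases h : ¬ Bad a b ∧ a.2.odd = true
    · obtain ⟨c, d, h'⟩ := exists_cross h.1 h.2
      exact ⟨c, d, fun _ _ => h'⟩
    · exact ⟨a, b, fun h1 h2 => (h ⟨h1, h2⟩).elim⟩
  have hinner : ∀ a b : Q, ∃ q, ¬ Bad a b → Opening a.2 → Closing b.2 →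
      Eqv [a, b] (Φ [q]) := by
    intro a b
    by_cases h : ¬ Bad a b ∧ Opening a.2 ∧ Closing b.2
    · obtain ⟨q, h'⟩ := exists_inner h.1 h.2.1 h.2.2
      exact ⟨q, fun _ _ _ => h'⟩
    · exact ⟨a, fun h1 h2 h3 => (h ⟨h1, h2, h3⟩).elim⟩
  -- Letters are rewritten by functions of the pair only, so the period survives.
  choose f g hfg using hcross
  choose e he using hinner
  have hfg' : ∀ j < n / 2, _ := fun j hj =>
    hfg _ _ (not_bad_of_not_Z hn (i := 2 * j) (by omega)) (hodd j (by omega))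
  let u : ℕ → Q := fun i => if i % 2 = 0 then f (x i) (x (i + 1)) else g (x (i - 1)) (x i)
  have hu0 : ∀ j, u (2 * j) = f (x (2 * j)) (x (2 * j + 1)) := fun j => by simp [u]
  have hu1 : ∀ j, u (2 * j + 1) = g (x (2 * j)) (x (2 * j + 1)) := fun j => by
    simp [u]
  have hu : ¬ Z (word u (2 * (n / 2))) := fun h => by
    refine hn (Z_of_factor 0 (2 * (n / 2)) (by omega) (h.congr (eqv_word fun j hj => ?_).symm))
    rw [hu0, hu1]
    exact (hfg' j hj).2.2
  refine ⟨fun j => e (u (2 * j + 1)) (u (2 * j + 2)), fun j => ?_, fun h => ?_⟩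
  · have h1 : u (2 * (j + p) + 1) = u (2 * j + 1) := by
      rw [hu1, hu1, ← hp (2 * j), ← hp (2 * j + 1)]
      congr 2 <;> ring
    have h2 : u (2 * (j + p) + 2) = u (2 * j + 2) := by
      rw [show 2 * (j + p) + 2 = 2 * (j + p + 1) by ring, show 2 * j + 2 = 2 * (j + 1) by ring,
        hu0, hu0, ← hp (2 * (j + 1)), ← hp (2 * (j + 1) + 1)]
      congr 2 <;> ring
    simp only [h1, h2]
  · refine hu (Z_of_factor 1 (2 * (n / 2 - 1)) ?_ (h.Φ.congr (eqv_Φ_word fun j hj => ?_).symm))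
    · by_contra h'
      have : n / 2 - 1 = 0 := by omega
      rw [this] at h
      simpa [word] using h.two_le
    · refine he _ _ (not_bad_of_not_Z hu (by omega)) ?_ ?_
      · rw [hu1]
        exact (hfg' j (by omega)).2.1
      · have := hu0 (j + 1)
        rw [show 2 * j + 1 + 1 = 2 * (j + 1) by ring, this]
        exact (hfg' (j + 1) (by omega)).1

/-- A word of period `p` and length at least `9 * p - 7` is zero. -/
theorem Z_of_periodic {p : ℕ} (hp : 1 ≤ p) {n : ℕ} {x : ℕ → Q} (hn : 9 * p ≤ n + 7)
    (hx : ∀ i, x (i + p) = x i) : Z (word x n) := by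
  induction p using Nat.strong_induction_on generalizing n x with
  | _ p ih =>
    by_contra hZ
    have hpar : ∀ i < n, (x i).2.odd = ((x 0).2.odd ^^ decide (i % 2 = 1)) := by
      intro i
      induction i with
      | zero => simp
      | succ i ih =>
        intro hi
        rw [odd_of_not_bad (not_bad_of_not_Z hZ hi), ih (by omega)]
        rcases Nat.mod_two_eq_zero_or_one i with h | h <;> simp [Nat.add_mod, h]
    have heven : p % 2 = 0 := by
      have h1 := hpar p (by omega)
      have h2 := hx 0
      rw [Nat.zero_add] at h2
      rw [h2] at h1
      by_contra h
      simp [Nat.mod_two_ne_zero.1 h] at h1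
    obtain ⟨q, rfl⟩ : ∃ q, p = 2 * q := ⟨p / 2, by omega⟩
    obtain ⟨d, hd, hd'⟩ : ∃ d ≤ 1, (x (0 + d)).2.odd = true := by
      by_cases h : (x 0).2.odd = true
      · exact ⟨0, by omega, h⟩
      · refine ⟨1, le_rfl, ?_⟩
        rw [Nat.zero_add, hpar 1 (by omega)]
        simpa using h
    obtain ⟨y, hy, hy'⟩ := exists_halving (x := fun i => x (i + d)) (n := n - d) (p := q) hd'
      (fun i => by rw [← hx (i + d)]; congr 1; ring)
      (fun h => hZ (Z_of_factor d _ (by omega) h))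
    exact hy' (ih q (by omega) (by omega) (by omega) hy)

lemma word_congr {x y : ℕ → Q} {n} (h : ∀ i < n, x i = y i) : word x n = word y n := by
  induction n generalizing x y with
  | zero => rfl
  | succ n ih =>
    rw [word, word, h 0 (by omega), ih fun i hi => h (i + 1) (by omega)]

lemma word_getD (l : List Q) (a : Q) : word (fun i => l.getD i a) l.length = l := by
  induction l with
  | nil => rfl
  | cons b l ih => simpa [word] using ih

/-! ### The presentation -/

instance : Finite Ctl :=
  Set.finite_univ_iff.1 <| (Set.toFinite
    {i0, r0, s0, j0, f0, h0, m0, k0, i1, l1, g1, t1, f1, p1, k1, n1}).subset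
      fun c _ => by cases c <;> simp

section Presentation

variable {n : ℕ} (e : Fin n ≃ Q)

/-- An element of the free semigroup as a nonempty list of letters. -/
def toL (u : FreeSemigroup (Fin n)) : List Q := (u.head :: u.tail).map e

lemma toL_mul (u v) : toL e (u * v) = toL e u ++ toL e v := by simp [toL]

lemma length_toL (u) : (toL e u).length = u.length := by simp [toL, FreeSemigroup.length]

lemma toL_injective : Function.Injective (toL e) := fun u v h => by
  have := List.map_injective_iff.2 e.injective h
  simp only [List.cons.injEq] at this
  exact FreeSemigroup.ext this.1 this.2

lemma toL_of (q) : toL e (.of (e.symm q)) = [q] := by simp [toL, FreeSemigroup.of]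

lemma exists_toL {T : List Q} (h : T ≠ []) : ∃ u, toL e u = T := by
  obtain _ | ⟨a, T⟩ := T
  · exact (h rfl).elim
  · exact ⟨⟨e.symm a, T.map e.symm⟩, by simp [toL]⟩

/-- The word representing zero: a pair of letters with equal parity, which is unreadable. -/
def w₀ : FreeSemigroup (Fin n) := .of (e.symm (i0, i0)) * .of (e.symm (i0, i0))

lemma toL_w₀ : toL e (w₀ e) = [(i0, i0), (i0, i0)] := by
  simp [w₀, toL_mul, toL_of]

lemma bad_i0 : Bad (i0, i0) (i0, i0) := by
  rintro σ σ' o (_ | ⟨s, _ | ⟨s', _ | _⟩⟩)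
  cases s
  cases s'

lemma Z_w₀ : Z (toL e (w₀ e)) :=
  ⟨[], [], _, _, _, .pair, bad_i0, by rw [toL_w₀]; exact .refl _⟩

/-- The defining relations: all steps between words of length `7`; an unreadable pair, plain or
framed, is zero; and the word `w₀` is absorbing. -/
def rels : Set (FreeSemigroup (Fin n) × FreeSemigroup (Fin n)) :=
  {p | (p.1.length = 7 ∧ p.2.length = 7 ∧ Step (toL e p.1) (toL e p.2)) ∨
    (p.2 = w₀ e ∧ ((∃ U a b, Pat U ∧ Bad a b ∧ toL e p.1 = U a b) ∨
      ∃ q, p.1 = .of q * w₀ e ∨ p.1 = w₀ e * .of q))}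

lemma Pat.le_four {U} (hU : Pat U) (a b) : (U a b).length ≤ 4 := by
  cases hU <;> simp [SelfSim.quad]

lemma finite_rels : (rels e).Finite := by
  have hfin : {u : FreeSemigroup (Fin n) | u.length ≤ 7}.Finite := by
    refine Set.Finite.of_finite_image (f := toL e) ?_ (toL_injective e).injOn
    refine (List.finite_length_le Q 7).subset ?_
    rintro _ ⟨u, hu, rfl⟩
    simpa [length_toL] using hu
  refine (hfin.prod hfin).subset ?_
  have h0 : (w₀ e).length = 2 := rfl
  rintro ⟨u, v⟩ (⟨h1, h2, -⟩ | ⟨rfl, ⟨U, a, b, hU, -, h⟩ | ⟨q, rfl | rfl⟩⟩)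
  · exact ⟨h1.le, h2.le⟩
  · refine ⟨?_, by simp [h0]⟩
    have := hU.le_four a b
    rw [← h, length_toL] at this
    exact this.trans (by norm_num)
  · simp [FreeSemigroup.length_mul, h0, FreeSemigroup.length_of]
  · simp [FreeSemigroup.length_mul, h0, FreeSemigroup.length_of]

/-- The congruence generated by the defining relations. -/
def con : Con (FreeSemigroup (Fin n)) := conGen fun u v => (u, v) ∈ rels e

variable {e}

lemma con_of_rels {u v} (h : (u, v) ∈ rels e) : con e u v := ConGen.Rel.of _ _ h

lemma con_mul_w₀ (u) : con e (u * w₀ e) (w₀ e) := by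
  induction u using FreeSemigroup.recOnMul with
  | ih1 q => exact con_of_rels (.inr ⟨rfl, .inr ⟨q, .inl rfl⟩⟩)
  | ih2 q v h1 h2 =>
    rw [mul_assoc]
    exact (con e).trans ((con e).mul ((con e).refl _) h2) h1

lemma con_w₀_mul (u) : con e (w₀ e * u) (w₀ e) := by
  induction u using FreeSemigroup.recOnMul with
  | ih1 q => exact con_of_rels (.inr ⟨rfl, .inr ⟨q, .inr rfl⟩⟩)
  | ih2 q v h1 h2 =>
    rw [← mul_assoc]
    exact (con e).trans ((con e).mul h1 ((con e).refl _)) h2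

lemma con_w₀_of_bad {u α β U a b} (hU : Pat U) (hb : Bad a b)
    (h : toL e u = α ++ U a b ++ β) : con e u (w₀ e) := by
  obtain ⟨b', hb'⟩ := exists_toL e (T := U a b)
    (List.ne_nil_of_length_pos (by have := hU.two_le a b; omega))
  have h1 : con e b' (w₀ e) := con_of_rels (.inr ⟨rfl, .inl ⟨U, a, b, hU, hb, hb'⟩⟩)
  have h2 : ∀ v, toL e v = α ++ U a b → con e v (w₀ e) := by
    intro v hv
    by_cases hα : α = []
    · subst hα
      rwa [toL_injective e (hv.trans (by simpa using hb'.symm))]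
    · obtain ⟨A, rfl⟩ := exists_toL e hα
      rw [toL_injective e (hv.trans (by rw [toL_mul, hb'] : _ = toL e (A * b')))]
      exact (con e).trans ((con e).mul ((con e).refl _) h1) (con_mul_w₀ _)
  by_cases hβ : β = []
  · subst hβ
    exact h2 u (by simpa using h)
  · obtain ⟨B, rfl⟩ := exists_toL e hβ
    obtain ⟨A, hA⟩ := exists_toL e (T := α ++ U a b)
      (List.ne_nil_of_length_pos (by have := hU.two_le a b; simp; omega))
    rw [← hA, ← toL_mul] at h
    rw [toL_injective e h]
    exact (con e).trans ((con e).mul (h2 A hA) ((con e).refl _)) (con_w₀_mul _)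

/-- Steps between words longer than `7` follow from those of length `7`: as a rule involves at most
four letters, a letter of the context can be stripped off. -/
lemma Step.con {u v} (h : Step (toL e u) (toL e v)) (hl : 7 ≤ u.length) : con e u v := by
  obtain ⟨k, hk⟩ := Nat.exists_eq_add_of_le hl
  induction k generalizing u v with
  | zero =>
    refine con_of_rels (.inl ⟨hk, ?_, h⟩)
    have := h.eqv.length
    rw [length_toL, length_toL] at this
    exact this.symm.trans hk
  | succ k ih =>
    obtain ⟨α, β, U, a, b, c, d, hU, hr, hu, hv⟩ := h
    have h4 := hU.le_four a b
    have h2 := hU.two_le a b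
    have h2' := hU.two_le c d
    have hlen := congrArg List.length hu
    simp only [length_toL, List.length_append] at hlen
    obtain _ | ⟨q, α⟩ := α
    · obtain rfl | ⟨β, q, rfl⟩ := List.eq_nil_or_concat' β
      · simp at hlen
        omega
      · obtain ⟨u', hu'⟩ := exists_toL e (T := U a b ++ β)
          (List.ne_nil_of_length_pos (by simp; omega))
        obtain ⟨v', hv'⟩ := exists_toL e (T := U c d ++ β)
          (List.ne_nil_of_length_pos (by simp; omega))
        have eu : u = u' * .of (e.symm q) := toL_injective e (by
          rw [toL_mul, toL_of, hu, hu']; simp)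
        have ev : v = v' * .of (e.symm q) := toL_injective e (by
          rw [toL_mul, toL_of, hv, hv']; simp)
        have hl' : u'.length = 7 + k := by
          rw [← length_toL e, hu']; simp at *; omega
        rw [eu, ev]
        exact (SelfSim.con e).mul (ih ⟨[], β, U, a, b, c, d, hU, hr, hu', hv'⟩ (by omega) hl')
          ((SelfSim.con e).refl _)
    · obtain ⟨u', hu'⟩ := exists_toL e (T := α ++ U a b ++ β)
        (List.ne_nil_of_length_pos (by simp; omega))
      obtain ⟨v', hv'⟩ := exists_toL e (T := α ++ U c d ++ β)
        (List.ne_nil_of_length_pos (by simp; omega))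
      have eu : u = .of (e.symm q) * u' := toL_injective e (by
        rw [toL_mul, toL_of, hu, hu']; simp)
      have ev : v = .of (e.symm q) * v' := toL_injective e (by
        rw [toL_mul, toL_of, hv, hv']; simp)
      have hl' : u'.length = 7 + k := by
        rw [← length_toL e, hu']; simp at *; omega
      rw [eu, ev]
      exact (SelfSim.con e).mul ((SelfSim.con e).refl _)
        (ih ⟨α, β, U, a, b, c, d, hU, hr, hu', hv'⟩ (by omega) hl')

lemma Eqv.con {T T'} (h : Eqv T T') :
    ∀ {u v}, toL e u = T → toL e v = T' → 7 ≤ u.length → con e u v := by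
  induction h with
  | rel _ _ h =>
    rintro u v rfl rfl hl
    exact h.con hl
  | refl _ =>
    rintro u v rfl h hl
    rw [toL_injective e h]
    exact (SelfSim.con e).refl _
  | symm T T' h ih =>
    rintro u v rfl rfl hl
    have := Eqv.length h
    rw [length_toL, length_toL] at this
    exact (SelfSim.con e).symm (ih rfl rfl (by omega))
  | trans T T' T'' h _ ih ih' =>
    rintro u v rfl rfl hl
    have hlen := Eqv.length h
    rw [length_toL] at hlen
    obtain ⟨w, rfl⟩ := exists_toL e (T := T') (List.ne_nil_of_length_pos (by omega))
    rw [length_toL] at hlen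
    exact (SelfSim.con e).trans (ih rfl rfl hl) (ih' rfl rfl (by omega))

lemma Z.con {u} (h : Z (toL e u)) (hl : 7 ≤ u.length) : con e u (w₀ e) := by
  obtain ⟨α, β, U, a, b, hU, hb, he⟩ := h
  have h2 := hU.two_le a b
  obtain ⟨v, hv⟩ := exists_toL e (T := α ++ U a b ++ β)
    (List.ne_nil_of_length_pos (by simp; omega))
  exact (SelfSim.con e).trans (he.con rfl hv hl) (con_w₀_of_bad hU hb hv)

variable (e) in
/-- The congruence identifying `Eqv`-congruent words, and all words in `Z`. It contains `con e` and
serves to tell elements of the quotient apart. -/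
def bound : Con (FreeSemigroup (Fin n)) where
  r u v := (Z (toL e u) ∧ Z (toL e v)) ∨ Eqv (toL e u) (toL e v)
  iseqv :=
    { refl := fun _ => .inr (.refl _)
      symm := by
        rintro u v (⟨h, h'⟩ | h)
        exacts [.inl ⟨h', h⟩, .inr h.symm]
      trans := by
        rintro u v w (⟨h, h'⟩ | h) (⟨k, k'⟩ | k)
        exacts [.inl ⟨h, k'⟩, .inl ⟨h, h'.congr k⟩, .inl ⟨k.congr h.symm, k'⟩,
          .inr (h.trans k)] }
  mul' := by
    intro u v u' v' h h'
    simp only [toL_mul]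
    have key : ∀ {T V}, Z T ∨ Z V → Z (T ++ V) := by
      rintro T V (h | h)
      · simpa using h.ctx [] V
      · simpa using h.ctx T []
    obtain ⟨h1, h2⟩ | h := h
    · exact .inl ⟨key (.inl h1), key (.inl h2)⟩
    · obtain ⟨h1, h2⟩ | h' := h'
      · exact .inl ⟨key (.inr h1), key (.inr h2)⟩
      · exact .inr (h.app h')

lemma con_le_bound : con e ≤ bound e := by
  refine Con.conGen_le.2 fun u v h => ?_
  obtain ⟨-, -, h⟩ | ⟨h, h'⟩ := h
  · exact .inr h.eqv
  · dsimp only at h h'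
    subst h
    refine .inl ⟨?_, Z_w₀ e⟩
    obtain ⟨U, a, b, hU, hb, h⟩ | ⟨q, rfl | rfl⟩ := h'
    · exact ⟨[], [], U, a, b, hU, hb, by simpa [h] using Eqv.refl _⟩
    · rw [toL_mul]
      simpa using (Z_w₀ e).ctx (toL e (.of q)) []
    · rw [toL_mul]
      simpa using (Z_w₀ e).ctx [] (toL e (.of q))

lemma infinite_quotient : Infinite (con e).Quotient := by
  have hex : ∀ k, ∃ u, toL e u = long k := fun k => exists_toL e
    (List.ne_nil_of_length_pos (by rw [length_long]; positivity))
  choose u hu using hex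
  refine Infinite.of_injective (fun k => (u k : (con e).Quotient)) fun j k h => ?_
  have h1 : bound e (u j) (u k) := con_le_bound ((Con.eq _).1 h)
  obtain ⟨h, -⟩ | h := h1
  · exact (not_Z_long j (hu j ▸ h)).elim
  · have := h.length
    rw [hu, hu, length_long, length_long] at this
    exact Nat.pow_right_injective le_rfl this

lemma toL_iterMul (u : FreeSemigroup (Fin n)) (k : ℕ) :
    toL e (iterMul u k) =
      word (fun i => (toL e u).getD (i % u.length) (i0, i0)) ((k + 1) * u.length) := by
  have hw : word (fun i => (toL e u).getD (i % u.length) (i0, i0)) u.length = toL e u := by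
    conv_rhs => rw [← word_getD (toL e u) (i0, i0), length_toL]
    exact word_congr fun i hi => by rw [Nat.mod_eq_of_lt hi]
  induction k with
  | zero => simpa [iterMul] using hw.symm
  | succ k ih =>
    rw [iterMul, toL_mul, ih, Nat.succ_mul (k + 1), word_add]
    simp only [Nat.add_mul_mod_self_right]
    rw [hw]

lemma con_iterMul (u : FreeSemigroup (Fin n)) : con e (iterMul u 8) (w₀ e) := by
  have hl : 1 ≤ u.length := by simp [FreeSemigroup.length]
  have h := toL_iterMul (e := e) u 8
  refine Z.con ?_ ?_
  · rw [h]
    exact Z_of_periodic hl (by omega) fun i => by simp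
  · rw [← length_toL e, h]
    have : ∀ x m, (word x m).length = m := by
      intro x m
      induction m generalizing x with
      | zero => rfl
      | succ m ih => simp [word, ih]
    rw [this]
    omega

lemma coe_iterMul {M : Type*} [Mul M] (c : Con M) (u : M) (k : ℕ) :
    iterMul (u : c.Quotient) k = (iterMul u k : M) := by
  induction k with
  | zero => rfl
  | succ k ih => rw [iterMul, ih, iterMul, Con.coe_mul]

end Presentation

end SelfSim

/-- Refined form of the main theorem: there is a finite presentation in which every
defining relation either equates two words of length `7`, or sets a word equal to a
fixed designated word `w₀` representing zero, and whose quotient semigroup is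
infinite, has the image of `w₀` as zero element `z`, and satisfies `x⁹ = z`. -/
theorem exists_finitely_presented_x9_eq_zero_relations_length_seven :
    ∃ (n : ℕ) (R : Set (FreeSemigroup (Fin n) × FreeSemigroup (Fin n)))
      (w₀ : FreeSemigroup (Fin n)),
      R.Finite ∧
      (∀ p ∈ R, (p.1.length = 7 ∧ p.2.length = 7) ∨ p.2 = w₀) ∧
      Infinite (conGen (fun u v => (u, v) ∈ R)).Quotient ∧
      ∃ z : (conGen (fun u v => (u, v) ∈ R)).Quotient,
        z = (w₀ : (conGen (fun u v => (u, v) ∈ R)).Quotient) ∧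
        (∀ x, z * x = z ∧ x * z = z) ∧
        ∀ x, iterMul x 8 = z := by
  let e := (Finite.equivFin SelfSim.Q).symm
  refine ⟨_, SelfSim.rels e, SelfSim.w₀ e, SelfSim.finite_rels e, ?_,
    SelfSim.infinite_quotient (e := e), _, rfl, fun x => ?_, fun x => ?_⟩
  · rintro p (⟨h1, h2, -⟩ | ⟨h, -⟩)
    exacts [.inl ⟨h1, h2⟩, .inr h]
  · induction x using Con.induction_on with
    | H u => exact ⟨(Con.eq _).2 (SelfSim.con_w₀_mul u), (Con.eq _).2 (SelfSim.con_mul_w₀ u)⟩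
  · induction x using Con.induction_on with
    | H u =>
      rw [SelfSim.coe_iterMul]
      exact (Con.eq _).2 (SelfSim.con_iterMul u)
end
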